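/- Let α ⊢ (k+2) and β ⊢ k with k ≥ 1. The irreducible S_k × S_{k+2}-module S^β ⊗ S^α appears as a constituent of the permutation module ℂO₁ if and only if α can be obtained from β by removing one box and then adding three boxes with no two of the added boxes in the same column, and its multiplicity equals the number of different ways this construction can be carried out. -/

import Mathlib

/-!
# Multiplicities in the permutation module on `O₁`

For `β` and `α` with `k` and `k + 2` boxes, let `N(β, α)` be the number of diagrams `γ` obtained from
`β` by removing a box and such that `α / γ` is a horizontal strip (with three boxes). The theorem
says that `S^β ⊗ S^α` has multiplicity `N(β, α)` in `ℂO₁`. The proof squeezes all the multiplicities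
at once between two bounds, so that neither induction of representations nor the Pieri rule for
modules is needed.

*Upper bound on average.* For Young symmetrizers `c_β`, `c_α`, the multiplicity is the rank of
`c_β c_α` on the module (`multIn_eq`). Orthogonality and quasi-primitivity of the Young symmetrizers
give `∑ mult(β, α) ⬝ dim S^β ⬝ dim S^α ≤ |O₁|` (`sum_multIn_le`), and clearly
`|O₁| ≤ k ⬝ C(k + 2, 3) ⬝ (k - 1)!` (`card_O1_le`).

*Lower bound for each multiplicity.* Each `γ` counted by `N(β, α)` gives a surjection in `O₁`, which
sends an entry of `α` in `γ` to the entry of `β` in the same box, and the three entries of `α / γ` to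
the entry of the box `β / γ` (`gammaFun`). It also gives a vector in the image of `c_β c_α`, obtained
from an indicator function fixed by the row stabilizers (`rowVec`). The coefficients of these vectors
at these surjections form a triangular matrix, the `γ` being ordered by the row of `β / γ`. The
diagonal does not vanish because no two terms cancel (`sign_eq_of_rowCond`). Hence
`N(β, α) ≤ mult(β, α)` (`card_mids_le`).

*Counting.* Write `f^μ` for the number of standard tableaux of shape `μ`. The commutation relation
`D U_r = U_r D + U_{r-1}` (`ncard_cover_hstrip`) between removing a box and adding a horizontal strip
implies `∑ N(β, α) ⬝ f^β ⬝ f^α = k ⬝ C(k + 2, 3) ⬝ (k - 1)!` (`sum_mids`). As `0 < f^μ ≤ dim S^μ`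
(`numSYT_pos`, `numSYT_le_finrank`), the inequalities above are all equalities.
-/

open scoped Classical

noncomputable section

open Equiv CategoryTheory


open Equiv

section PermEmbed

/-- Conjugating permutations by an equivalence, as an isomorphism of groups. -/
def permCongrMulEquiv {α β : Type} (e : α ≃ β) : Perm α ≃* Perm β :=
  { Equiv.permCongr e with
    map_mul' := fun f g => by
      ext x
      simp [Equiv.permCongr_apply] }

/-- Transport of permutation groups along an equality of cardinalities. -/
def castPermHom {m n : ℕ} (h : m = n) : Perm (Fin m) →* Perm (Fin n) :=
  (permCongrMulEquiv (finCongr h)).toMonoidHom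

/-- The standard embedding of `S_a × S_b` into `S_{a+b}`, where `S_a` permutes the
first `a` points and `S_b` permutes the last `b` points. -/
def embPair (a b : ℕ) : Perm (Fin a) × Perm (Fin b) →* Perm (Fin (a + b)) :=
  (permCongrMulEquiv finSumFinEquiv).toMonoidHom.comp (Equiv.Perm.sumCongrHom (Fin a) (Fin b))

end PermEmbed

section Surj

/-- The set of surjections from `{1, …, r}` onto `{1, …, k}`. -/
def SurjFun (r k : ℕ) : Type := {f : Fin r → Fin k // Function.Surjective f}

variable {r k : ℕ}

instance : SMul (Perm (Fin k) × Perm (Fin r)) (SurjFun r k) :=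
  ⟨fun p f => ⟨fun x => p.1 (f.1 (p.2⁻¹ x)), by
    intro y
    obtain ⟨x, hx⟩ := f.2 (p.1⁻¹ y)
    exact ⟨p.2 x, by simp [hx]⟩⟩⟩

lemma surj_smul_def (p : Perm (Fin k) × Perm (Fin r)) (f : SurjFun r k) (x : Fin r) :
    (p • f).1 x = p.1 (f.1 (p.2⁻¹ x)) := rfl

/-- The action of `S_k × S_r` on the surjections `{1,…,r} ↠ {1,…,k}` given by
`(σ, π) ⬝ f = σ ∘ f ∘ π⁻¹`. -/
instance : MulAction (Perm (Fin k) × Perm (Fin r)) (SurjFun r k) where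
  one_smul f := Subtype.ext (funext fun x => by simp [surj_smul_def])
  mul_smul p q f := Subtype.ext (funext fun x => by
    simp [surj_smul_def, Perm.mul_apply, mul_inv_rev])

/-- The multiset of sizes of the kernel classes of a surjection `f : {1,…,r} ↠ {1,…,k}`,
i.e. the integer partition `I(ker f)`. -/
def kernelSizes (f : Fin r → Fin k) : Multiset ℕ :=
  Finset.univ.val.map fun y => (Finset.univ.filter fun x => f x = y).card

lemma kernelSizes_smul (p : Perm (Fin k) × Perm (Fin r)) (f : SurjFun r k) :
    kernelSizes (p • f).1 = kernelSizes f.1 := by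
  obtain ⟨σ, π⟩ := p
  have hfib : ∀ y : Fin k,
      (Finset.univ.filter fun x => ((σ, π) • f).1 x = y) =
        (Finset.univ.filter fun x => f.1 x = σ⁻¹ y).map π.toEmbedding := by
    intro y
    ext x
    simp only [Finset.mem_filter, Finset.mem_map, Finset.mem_univ, true_and,
      Equiv.coe_toEmbedding, surj_smul_def]
    constructor
    · intro h
      refine ⟨π⁻¹ x, ?_, by simp⟩
      rw [← h]
      simp
    · rintro ⟨x', hx', rfl⟩
      simp [hx']
  have : kernelSizes ((σ, π) • f).1 =
      Finset.univ.val.map fun y => (Finset.univ.filter fun x => f.1 x = σ⁻¹ y).card := by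
    unfold kernelSizes
    refine Multiset.map_congr rfl fun y _ => ?_
    rw [hfib y, Finset.card_map]
  rw [this]
  unfold kernelSizes
  have huniv : Finset.univ.val.map (⇑σ⁻¹) = Finset.univ.val := by
    have := congrArg Finset.val (Finset.map_univ_equiv σ⁻¹)
    simpa [Finset.map] using this
  calc (Finset.univ.val.map fun y => (Finset.univ.filter fun x => f.1 x = σ⁻¹ y).card)
      = (Finset.univ.val.map (⇑σ⁻¹)).map
          (fun z => (Finset.univ.filter fun x => f.1 x = z).card) := by
        rw [Multiset.map_map]
        rfl
    _ = Finset.univ.val.map (fun z => (Finset.univ.filter fun x => f.1 x = z).card) := by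
        rw [huniv]

end Surj
section Young


/-- Given the list of row lengths of a Young diagram, the index of the row containing
the `m`-th box (boxes numbered row by row, from `0`). -/
def rowOfAux : List ℕ → ℕ → ℕ
  | [], _ => 0
  | a :: t, m => if m < a then 0 else rowOfAux t (m - a) + 1

/-- Given the list of row lengths of a Young diagram, the index of the column containing
the `m`-th box (boxes numbered row by row, from `0`). -/
def colOfAux : List ℕ → ℕ → ℕ
  | [], m => m
  | a :: t, m => if m < a then m else colOfAux t (m - a)

/-- The row index of the `m`-th box of the canonical filling of `μ`. -/
def rowIndex (μ : YoungDiagram) (m : ℕ) : ℕ := rowOfAux μ.rowLens m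

/-- The column index of the `m`-th box of the canonical filling of `μ`. -/
def colIndex (μ : YoungDiagram) (m : ℕ) : ℕ := colOfAux μ.rowLens m

/-- The row stabilizer of the canonical tableau of shape `μ` in `S_k`. -/
def rowStabilizer (k : ℕ) (μ : YoungDiagram) : Subgroup (Perm (Fin k)) where
  carrier := {σ | ∀ m : Fin k, rowIndex μ (σ m) = rowIndex μ m}
  one_mem' := fun _ => rfl
  mul_mem' := by
    intro σ τ hσ hτ m
    have h1 := hσ (τ m)
    have h2 := hτ m
    simpa [Perm.mul_apply, h2] using h1
  inv_mem' := by
    intro σ hσ m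
    have := hσ (σ⁻¹ m)
    simpa using this.symm

/-- The column stabilizer of the canonical tableau of shape `μ` in `S_k`. -/
def colStabilizer (k : ℕ) (μ : YoungDiagram) : Subgroup (Perm (Fin k)) where
  carrier := {σ | ∀ m : Fin k, colIndex μ (σ m) = colIndex μ m}
  one_mem' := fun _ => rfl
  mul_mem' := by
    intro σ τ hσ hτ m
    have h1 := hσ (τ m)
    have h2 := hτ m
    simpa [Perm.mul_apply, h2] using h1
  inv_mem' := by
    intro σ hσ m
    have := hσ (σ⁻¹ m)
    simpa using this.symm

/-- The Young symmetrizer of (the canonical tableau of) the Young diagram `μ`, inside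
the complex group algebra of `S_k`. -/
def youngSymmetrizer (k : ℕ) (μ : YoungDiagram) : MonoidAlgebra ℂ (Perm (Fin k)) :=
  (∑ σ : Perm (Fin k), if σ ∈ colStabilizer k μ
      then ((Perm.sign σ : ℤ) : ℂ) • MonoidAlgebra.single σ (1 : ℂ) else 0) *
  (∑ σ : Perm (Fin k), if σ ∈ rowStabilizer k μ then MonoidAlgebra.single σ (1 : ℂ) else 0)

/-- The Specht module of shape `μ` (for `μ` a Young diagram with `k` boxes), realized
as the left ideal of the complex group algebra of `S_k` generated by the Young
symmetrizer of `μ`. -/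
def SpechtIdeal (k : ℕ) (μ : YoungDiagram) :
    Submodule (MonoidAlgebra ℂ (Perm (Fin k))) (MonoidAlgebra ℂ (Perm (Fin k))) :=
  Submodule.span _ {youngSymmetrizer k μ}

/-- The Specht module of shape `μ` as a representation of the symmetric group `S_k`. -/
def SpechtRep (k : ℕ) (μ : YoungDiagram) : Rep ℂ (Perm (Fin k)) :=
  Rep.equivalenceModuleMonoidAlgebra.inverse.obj
    (ModuleCat.of (MonoidAlgebra ℂ (Perm (Fin k))) (SpechtIdeal k μ))

end Young
section RepUtil


variable {G H : Type} [Monoid G] [Monoid H]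

/-- The multiplicity of (a simple) `S` as an irreducible constituent of `M`:
the dimension of the space of `G`-equivariant maps `S → M`. -/
def multIn (S M : Rep ℂ G) : ℕ := Module.finrank ℂ (S ⟶ M)

/-- The outer tensor product `V ⊗ W` of a `G`-representation and an `H`-representation,
as a representation of `G × H`. -/
def outerTensor (V : Rep ℂ G) (W : Rep ℂ H) : Rep ℂ (G × H) :=
  Rep.of (Representation.tprod (V.ρ.comp (MonoidHom.fst G H)) (W.ρ.comp (MonoidHom.snd G H)))

/-- The permutation representation of `G` on (the complex vector space spanned by) a
`G`-set `X`. -/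
def permRep (X : Type) [MulAction G X] : Rep ℂ G :=
  Rep.of (Representation.ofMulAction ℂ G X)

variable {K : Type} [Group K] {L : Type} [Group L]

/-- The carrier of the induced representation along `φ : K →* L` : the space of
functions `f : L → U` with `f (g * φ h) = h⁻¹ ⬝ f g`, which for an injective `φ`
between finite groups is the standard concrete model of `ℂL ⊗_{ℂK} U`. -/
def indCarrier (φ : K →* L) (U : Rep ℂ K) : Submodule ℂ (L → U) where
  carrier := {f | ∀ (h : K) (g : L), f (g * φ h) = U.ρ h⁻¹ (f g)}
  add_mem' := by
    intro f₁ f₂ h₁ h₂ h g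
    simp [h₁ h g, h₂ h g]
  zero_mem' := by
    intro h g
    simp
  smul_mem' := by
    intro c f hf h g
    simp [hf h g]

/-- The action of `L` on the induced representation. -/
def indAction (φ : K →* L) (U : Rep ℂ K) (g₀ : L) :
    ↥(indCarrier φ U) →ₗ[ℂ] ↥(indCarrier φ U) where
  toFun f := ⟨fun g => (f : L → U) (g₀⁻¹ * g), by
    intro h g
    have h2 := f.2 h (g₀⁻¹ * g)
    rw [mul_assoc] at h2
    exact h2⟩
  map_add' f₁ f₂ := Subtype.ext rfl
  map_smul' c f := Subtype.ext rfl

/-- The representation of `L` induced along `φ : K →* L` from a representation `U`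
of `K`; concretely modeled by `K`-equivariant functions `L → U`. -/
def indRep (φ : K →* L) (U : Rep ℂ K) : Rep ℂ L :=
  Rep.of
    { toFun := indAction φ U
      map_one' := by
        apply LinearMap.ext
        intro f
        apply Subtype.ext
        funext g
        simp [indAction]
      map_mul' := by
        intro g₁ g₂
        apply LinearMap.ext
        intro f
        apply Subtype.ext
        funext g
        simp [indAction, mul_assoc] }

end RepUtil

/-- Restriction (or inflation) of a representation along a monoid homomorphism. -/
def resRep {G H : Type} [Monoid G] [Monoid H] (φ : H →* G) (V : Rep ℂ G) : Rep ℂ H :=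
  Rep.of (V.ρ.comp φ)

section OrbitTypes

variable (k : ℕ)

/-- The set `O₁` of surjections `{1,…,k+2} ↠ {1,…,k}` whose kernel classes have
sizes `[3, 1^{k-1}]`, as a `S_k × S_{k+2}`-set. -/
def O1Type : Type :=
  {f : SurjFun (k + 2) k // kernelSizes f.1 = 3 ::ₘ Multiset.replicate (k - 1) 1}

/-- The set `O₂` of surjections `{1,…,k+2} ↠ {1,…,k}` whose kernel classes have
sizes `[2, 2, 1^{k-2}]`, as a `S_k × S_{k+2}`-set. -/
def O2Type : Type :=
  {f : SurjFun (k + 2) k // kernelSizes f.1 = 2 ::ₘ 2 ::ₘ Multiset.replicate (k - 2) 1}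

instance : MulAction (Perm (Fin k) × Perm (Fin (k + 2))) (O1Type k) where
  smul p f := ⟨p • f.1, by rw [kernelSizes_smul]; exact f.2⟩
  one_smul f := Subtype.ext (one_smul _ _)
  mul_smul p q f := Subtype.ext (mul_smul p q f.1)

instance : MulAction (Perm (Fin k) × Perm (Fin (k + 2))) (O2Type k) where
  smul p f := ⟨p • f.1, by rw [kernelSizes_smul]; exact f.2⟩
  one_smul f := Subtype.ext (one_smul _ _)
  mul_smul p q f := Subtype.ext (mul_smul p q f.1)

end OrbitTypes

/-! ### Horizontal strips and the number of standard tableaux -/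

/-- The finite set of Young diagrams with `n` boxes. -/
def YD (n : ℕ) : Finset YoungDiagram :=
  Set.Finite.toFinset (s := {μ : YoungDiagram | μ.card = n}) (by
    refine Set.Finite.subset (Set.Finite.preimage (f := YoungDiagram.cells)
      (fun a _ b _ h => YoungDiagram.ext h)
      ((Finset.range n ×ˢ Finset.range n).powerset.finite_toSet)) ?_
    intro μ hμ
    simp only [Set.mem_ofPred_eq] at hμ
    simp only [Set.mem_preimage, Finset.mem_coe, Finset.mem_powerset]
    intro ⟨i, j⟩ hc
    rw [YoungDiagram.mem_cells] at hc
    have h1 : μ.colLen j ≤ n := by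
      rw [YoungDiagram.colLen_eq_card, ← hμ]
      exact Finset.card_le_card (Finset.filter_subset _ _)
    have h2 : μ.rowLen i ≤ n := by
      rw [YoungDiagram.rowLen_eq_card, ← hμ]
      exact Finset.card_le_card (Finset.filter_subset _ _)
    have h3 := YoungDiagram.mem_iff_lt_colLen.1 hc
    have h4 := YoungDiagram.mem_iff_lt_rowLen.1 hc
    simp only [Finset.mem_product, Finset.mem_range]
    omega)

lemma mem_YD {n : ℕ} {μ : YoungDiagram} : μ ∈ YD n ↔ μ.card = n := by
  simp [YD]

/-- `IsHStrip γ α`: the skew shape `α / γ` is a horizontal strip. -/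
def IsHStrip (γ α : YoungDiagram) : Prop :=
  γ.cells ⊆ α.cells ∧
    ∀ c₁ ∈ α.cells \ γ.cells, ∀ c₂ ∈ α.cells \ γ.cells, c₁ ≠ c₂ → c₁.2 ≠ c₂.2

lemma le_iff_rowLen {γ α : YoungDiagram} : γ ≤ α ↔ ∀ i, γ.rowLen i ≤ α.rowLen i := by
  constructor
  · intro h i
    by_contra! hlt
    have : (i, α.rowLen i) ∈ γ := YoungDiagram.mem_iff_lt_rowLen.2 hlt
    have := YoungDiagram.mem_iff_lt_rowLen.1 (h this)
    omega
  · intro h ⟨i, j⟩ hc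
    have := YoungDiagram.mem_iff_lt_rowLen.1 hc
    exact YoungDiagram.mem_iff_lt_rowLen.2 (lt_of_lt_of_le this (h i))

lemma rowLen_injective : Function.Injective YoungDiagram.rowLen := by
  intro a b h
  exact le_antisymm (le_iff_rowLen.2 fun i => by rw [h]) (le_iff_rowLen.2 fun i => by rw [h])

/-- Horizontal strips are exactly the interlacing pairs of row lengths. -/
lemma isHStrip_iff {γ α : YoungDiagram} : IsHStrip γ α ↔
    ∀ i, γ.rowLen i ≤ α.rowLen i ∧ α.rowLen (i + 1) ≤ γ.rowLen i := by
  constructor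
  · rintro ⟨h1, h2⟩ i
    refine ⟨le_iff_rowLen.1 (YoungDiagram.cells_subset_iff.1 h1) i, ?_⟩
    by_contra! hlt
    have a1 := γ.rowLen_anti i (i+1) (by omega)
    have a2 := α.rowLen_anti i (i+1) (by omega)
    refine h2 (i + 1, γ.rowLen i) ?_ (i, γ.rowLen i) ?_ (by simp) rfl
    · simp only [Finset.mem_sdiff, YoungDiagram.mem_cells, YoungDiagram.mem_iff_lt_rowLen]
      omega
    · simp only [Finset.mem_sdiff, YoungDiagram.mem_cells, YoungDiagram.mem_iff_lt_rowLen]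
      omega
  · intro h
    refine ⟨YoungDiagram.cells_subset_iff.2 (le_iff_rowLen.2 fun i => (h i).1), ?_⟩
    have key : ∀ a b j, (a, j) ∈ α.cells \ γ.cells → (b, j) ∈ α.cells \ γ.cells → ¬ a < b := by
      intro a b j ha hb hab
      simp only [Finset.mem_sdiff, YoungDiagram.mem_cells, YoungDiagram.mem_iff_lt_rowLen] at ha hb
      have a2 := α.rowLen_anti (a+1) b (by omega)
      have := (h a).2
      omega
    rintro ⟨a, j⟩ ha ⟨b, j'⟩ hb hne (rfl : j = j')
    have h1 := key a b j ha hb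
    have h2 := key b a j hb ha
    exact hne (by rw [Prod.mk.injEq]; omega)

/-- The Young diagram with prescribed row lengths. -/
def ydOfFun (f : ℕ → ℕ) (hf : Antitone f) (N : ℕ) (_hN : f N = 0) : YoungDiagram where
  cells := (Finset.range N ×ˢ Finset.range (f 0)).filter fun c => c.2 < f c.1
  isLowerSet := by
    rintro ⟨a, b⟩ ⟨c, d⟩ hle h
    obtain ⟨h1, h2⟩ := Prod.mk_le_mk.1 hle
    simp only [Finset.coe_filter, Finset.mem_product, Finset.mem_range, Set.mem_ofPred_eq] at h ⊢
    have := hf h1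
    omega

lemma rowLen_ydOfFun (f : ℕ → ℕ) (hf : Antitone f) (N : ℕ) (hN : f N = 0) :
    (ydOfFun f hf N hN).rowLen = f := by
  funext i
  have : ∀ j, j < (ydOfFun f hf N hN).rowLen i ↔ j < f i := by
    intro j
    rw [← YoungDiagram.mem_iff_lt_rowLen, ← YoungDiagram.mem_cells]
    simp only [ydOfFun, Finset.mem_filter, Finset.mem_product, Finset.mem_range]
    constructor
    · tauto
    · intro h
      refine ⟨⟨?_, lt_of_lt_of_le h (hf (Nat.zero_le _))⟩, h⟩
      by_contra! hlt
      have := hf hlt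
      omega
  have h1 := this (f i)
  have h2 := this ((ydOfFun f hf N hN).rowLen i)
  omega

/-- `IsCover δ γ`: the diagram `γ` is obtained from `δ` by adding one box. -/
def IsCover (δ γ : YoungDiagram) : Prop := δ ≤ γ ∧ δ.card + 1 = γ.card

lemma rowLen_of_insert {δ γ : YoungDiagram} {c : ℕ × ℕ} (hc : c ∉ δ.cells)
    (h : γ.cells = insert c δ.cells) (j : ℕ) :
    γ.rowLen j = δ.rowLen j + if j = c.1 then 1 else 0 := by
  rw [YoungDiagram.rowLen_eq_card, YoungDiagram.rowLen_eq_card, YoungDiagram.row,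
    YoungDiagram.row, h, Finset.filter_insert]
  split_ifs with h1 h2 h2
  · rw [Finset.card_insert_of_notMem]
    simp [hc]
  · exact absurd h1.symm h2
  · exact absurd h2.symm h1
  · rfl

lemma IsCover.exists_insert {δ γ : YoungDiagram} (h : IsCover δ γ) :
    ∃ c, c ∉ δ.cells ∧ γ.cells = insert c δ.cells := by
  have hs := YoungDiagram.cells_subset_iff.2 h.1
  have : (γ.cells \ δ.cells).card = 1 := by
    rw [Finset.card_sdiff_of_subset hs]
    have := h.2
    change δ.cells.card + 1 = γ.cells.card at this
    omega
  obtain ⟨c, hc⟩ := Finset.card_eq_one.1 this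
  have hc' : c ∈ γ.cells \ δ.cells := by rw [hc]; simp
  refine ⟨c, (Finset.mem_sdiff.1 hc').2, ?_⟩
  rw [Finset.insert_eq, ← hc, Finset.sdiff_union_of_subset hs]

lemma isCover_iff {δ γ : YoungDiagram} : IsCover δ γ ↔
    ∃ i, ∀ j, γ.rowLen j = δ.rowLen j + if j = i then 1 else 0 := by
  constructor
  · intro h
    obtain ⟨c, hc, h⟩ := h.exists_insert
    exact ⟨c.1, rowLen_of_insert hc h⟩
  · rintro ⟨i, hi⟩
    refine ⟨le_iff_rowLen.2 fun j => by rw [hi]; omega, ?_⟩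
    have hn : (i, δ.rowLen i) ∉ δ.cells := by
      simp [YoungDiagram.mem_iff_lt_rowLen]
    have : γ.cells = insert (i, δ.rowLen i) δ.cells := by
      ext ⟨a, b⟩
      simp only [Finset.mem_insert, YoungDiagram.mem_cells, YoungDiagram.mem_iff_lt_rowLen, hi,
        Prod.mk.injEq]
      split_ifs with h
      · subst h; omega
      · omega
    change δ.cells.card + 1 = γ.cells.card
    rw [this, Finset.card_insert_of_notMem hn]

/-- The predicate that adding a box to `l` in row `i` yields a diagram forming a horizontal
strip over `γ`, in terms of row lengths. -/
def AddOK (γ l : ℕ → ℕ) (i : ℕ) : Prop :=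
  ∀ j, γ j ≤ l j + (if j = i then 1 else 0) ∧ l (j + 1) + (if j + 1 = i then 1 else 0) ≤ γ j

/-- The predicate that removing a box from `γ` in row `i` yields a diagram over which `l` is a
horizontal strip, in terms of row lengths. -/
def RemOK (γ l : ℕ → ℕ) (i : ℕ) : Prop :=
  ∀ j, γ j ≤ l j + (if j = i then 1 else 0) ∧ l (j + 1) + (if j = i then 1 else 0) ≤ γ j

/-- Apart from row `0`, which is available exactly when `l / γ` is itself a horizontal strip, a box
can be added to `l` in row `i + 1` if and only if one can be removed from `γ` in row `i`. -/
lemma ncard_addOK (γ l : ℕ → ℕ) (hγ : Antitone γ) (hl : Antitone l) (N : ℕ) (hN : γ N = 0) :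
    {i | AddOK γ l i}.ncard = {i | RemOK γ l i}.ncard +
      if (∀ i, γ i ≤ l i ∧ l (i + 1) ≤ γ i) then 1 else 0 := by
  split_ifs with h
  · have hfin : {i | RemOK γ l i}.Finite := by
      refine (Set.finite_lt_nat N).subset fun i hi => ?_
      by_contra! hlt
      simp only [Set.mem_ofPred_eq, not_lt] at hlt
      have h1 := hγ hlt
      have h2 := (hi i).2
      simp at h2
      omega
    have : {i | AddOK γ l i} = insert 0 (Nat.succ '' {i | RemOK γ l i}) := by
      ext i
      simp only [Set.mem_insert_iff, Set.mem_image, Set.mem_ofPred_eq]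
      cases i with
      | zero =>
        simp only [Nat.succ_ne_zero, and_false, exists_false, or_false, iff_true]
        intro j
        obtain ⟨h1, h2⟩ := h j
        constructor
        · omega
        · simpa using h2
      | succ i =>
        simp only [Nat.succ_eq_add_one, Nat.add_right_cancel_iff, exists_eq_right,
          Nat.add_eq_zero_iff, one_ne_zero, and_false, false_or]
        constructor
        · intro H j
          have h1 := h j
          have h2 := (H j).2
          split_ifs at h2 ⊢ <;> omega
        · intro H j
          have h1 := h j
          have h2 := (H j).2
          split_ifs at h2 ⊢ <;> omega
    rw [this, Set.ncard_insert_of_notMem (by simp) (hfin.image _),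
      Set.ncard_image_of_injective _ Nat.succ_injective]
  · congr 1
    ext i
    push Not at h
    obtain ⟨j₀, hj₀⟩ := h
    simp only [Set.mem_ofPred_eq]
    constructor
    · intro H j
      have h0 := H j₀
      have h1 := H j
      have h2 := hl (Nat.le_succ i)
      by_cases hj : j₀ = i
      · subst hj
        by_cases hj' : j = j₀
        · subst hj'; simp at h0 h1 h2 ⊢; omega
        · simp [hj'] at h0 h1 ⊢; split_ifs at h1 <;> omega
      · simp [hj] at h0; have := hj₀ h0.1; split_ifs at h0 <;> omega
    · intro H j
      have h0 := H j₀
      have h1 := H j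
      by_cases hj : j₀ = i
      · subst hj
        by_cases hj' : j = j₀
        · subst hj'; simp at h0 h1 ⊢; omega
        · simp [hj'] at h0 h1 ⊢
          split_ifs with h3
          · have := hγ (Nat.le_succ j)
            subst h3
            simp at *
            omega
          · omega
      · simp [hj] at h0; have := hj₀ h0.1; omega

/-- The commutation relation `D U_r = U_r D + U_{r-1}` between removing a box and adding a
horizontal strip, in terms of counts of intermediate diagrams. -/
lemma ncard_cover_hstrip (γ l : YoungDiagram) :
    {α | IsCover l α ∧ IsHStrip γ α}.ncard = {δ | IsCover δ γ ∧ IsHStrip δ l}.ncard +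
      if IsHStrip γ l then 1 else 0 := by
  have hz : ∀ μ : YoungDiagram, ∃ N, ∀ n, N ≤ n → μ.rowLen n = 0 := by
    intro μ
    refine ⟨μ.colLen 0, fun n hn => ?_⟩
    by_contra h
    have : (n, 0) ∈ μ := YoungDiagram.mem_iff_lt_rowLen.2 (Nat.pos_of_ne_zero h)
    have := YoungDiagram.mem_iff_lt_colLen.1 this
    omega
  have anti : ∀ μ : YoungDiagram, Antitone μ.rowLen := fun μ i j h => μ.rowLen_anti i j h
  obtain ⟨N, hN⟩ := hz γ
  obtain ⟨N', hN'⟩ := hz l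
  have key := ncard_addOK γ.rowLen l.rowLen (anti _) (anti _) N (hN N le_rfl)
  simp only [isHStrip_iff (γ := γ) (α := l)]
  rw [show {α | IsCover l α ∧ IsHStrip γ α}.ncard = {i | AddOK γ.rowLen l.rowLen i}.ncard from ?_,
    show {δ | IsCover δ γ ∧ IsHStrip δ l}.ncard = {i | RemOK γ.rowLen l.rowLen i}.ncard from ?_]
  · exact key
  · symm
    refine Set.ncard_congr (fun i hi => ydOfFun (fun j => γ.rowLen j - if j = i then 1 else 0) ?_ N
      (by simp [hN N le_rfl])) ?_ ?_ ?_
    · refine antitone_nat_of_succ_le fun j => ?_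
      have h0 := hi j
      have h1 := hi (j + 1)
      have h2 := anti γ (Nat.le_succ j)
      simp only [Nat.succ_eq_add_one] at h2
      split_ifs at h0 h1 ⊢ <;> omega
    · intro i hi
      refine ⟨isCover_iff.2 ⟨i, fun j => ?_⟩, isHStrip_iff.2 fun j => ?_⟩
      · rw [rowLen_ydOfFun]
        have := hi j
        split_ifs at this ⊢ <;> omega
      · rw [rowLen_ydOfFun]
        have := hi j
        split_ifs at this ⊢ <;> omega
    · intro i i' hi hi' h
      have h := congrArg (fun μ => μ.rowLen i) h
      simp only [rowLen_ydOfFun] at h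
      have := hi i
      by_contra hne
      simp [hne] at h this
      omega
    · rintro δ ⟨h1, h2⟩
      obtain ⟨i, hi⟩ := isCover_iff.1 h1
      rw [isHStrip_iff] at h2
      refine ⟨i, fun j => ?_, ?_⟩
      · rw [hi]
        have := h2 j
        split_ifs <;> omega
      · apply rowLen_injective
        rw [rowLen_ydOfFun]
        funext j
        rw [hi]; omega
  · symm
    refine Set.ncard_congr (fun i hi => ydOfFun (fun j => l.rowLen j + if j = i then 1 else 0) ?_
      (N' + i + 1) (by simp [hN' (N' + i + 1) (by omega)]; omega)) ?_ ?_ ?_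
    · refine antitone_nat_of_succ_le fun j => ?_
      have h0 := hi j
      have h1 := hi (j + 1)
      have h2 := anti l (Nat.le_succ j)
      simp only [Nat.succ_eq_add_one] at h2
      split_ifs at h0 h1 ⊢ <;> omega
    · intro i hi
      refine ⟨isCover_iff.2 ⟨i, fun j => ?_⟩, isHStrip_iff.2 fun j => ?_⟩
      · rw [rowLen_ydOfFun]
      · rw [rowLen_ydOfFun]
        exact hi j
    · intro i i' hi hi' h
      have h := congrArg (fun μ => μ.rowLen i) h
      simp only [rowLen_ydOfFun] at h
      by_contra hne
      simp [hne] at h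
    · rintro δ ⟨h1, h2⟩
      obtain ⟨i, hi⟩ := isCover_iff.1 h1
      rw [isHStrip_iff] at h2
      refine ⟨i, fun j => ?_, ?_⟩
      · rw [← hi, ← hi]
        exact h2 j
      · apply rowLen_injective
        rw [rowLen_ydOfFun]
        funext j
        rw [hi]

/-- The number of standard Young tableaux of a diagram with `n` boxes, defined by the branching
recursion. -/
def numSYT : ℕ → YoungDiagram → ℕ
  | 0, _ => 1
  | n + 1, μ => ∑ γ ∈ (YD n).filter (· ≤ μ), numSYT n γ

lemma isHStrip_eq {γ α : YoungDiagram} (h : IsHStrip γ α) (hc : γ.card = α.card) : γ = α := by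
  apply YoungDiagram.ext
  exact Finset.eq_of_subset_of_card_le h.1 hc.ge

lemma isHStrip_refl (γ : YoungDiagram) : IsHStrip γ γ := by
  rw [isHStrip_iff]
  exact fun i => ⟨le_rfl, γ.rowLen_anti i (i+1) (by omega)⟩

/-- A horizontal strip of size `0` over `γ` is `γ` itself. -/
lemma filter_hstrip_self {n : ℕ} {γ : YoungDiagram} (hγ : γ ∈ YD n) :
    (YD n).filter (IsHStrip γ) = {γ} := by
  ext α
  simp only [Finset.mem_filter, Finset.mem_singleton]
  rw [mem_YD] at *
  constructor
  · rintro ⟨h1, h2⟩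
    exact (isHStrip_eq h2 (by rw [h1, hγ])).symm
  · rintro rfl
    exact ⟨hγ, isHStrip_refl _⟩

/-- The dimension count of Pieri's rule. The induction removes the largest entry of the standard
tableaux and uses `ncard_cover_hstrip`, which turns into Pascal's rule for the binomials. -/
lemma sum_numSYT_hstrip : ∀ n m r γ, m + r = n → γ ∈ YD m →
    ∑ α ∈ (YD n).filter (IsHStrip γ), numSYT n α = n.choose r * numSYT m γ := by
  intro n
  induction n with
  | zero =>
    intro m r γ h hγ
    obtain rfl : m = 0 := by omega
    obtain rfl : r = 0 := by omega
    rw [filter_hstrip_self hγ]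
    simp
  | succ n ih =>
    intro m r γ h hγ
    rcases r with _ | s
    · obtain rfl : m = n + 1 := by omega
      rw [filter_hstrip_self hγ]
      simp
    have e1 : ∑ α ∈ (YD (n+1)).filter (IsHStrip γ), numSYT (n+1) α =
        ∑ l ∈ YD n, {α | IsCover l α ∧ IsHStrip γ α}.ncard * numSYT n l := by
      simp only [numSYT]
      simp_rw [Finset.sum_filter]
      simp_rw [← Finset.sum_filter (p := IsHStrip γ)]
      rw [Finset.sum_comm]
      refine Finset.sum_congr rfl fun l hl => ?_
      rw [← Finset.sum_filter, Finset.sum_const, smul_eq_mul]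
      congr 1
      rw [← Set.ncard_coe_finset]
      congr 1
      ext α
      simp only [Finset.coe_filter, Finset.mem_filter, mem_YD, Set.mem_ofPred_eq, IsCover] at hl ⊢
      rw [hl]
      tauto
    have e2 : ∑ l ∈ YD n, {δ | IsCover δ γ ∧ IsHStrip δ l}.ncard * numSYT n l
        = n.choose (s+1) * numSYT m γ := by
      rcases m with _ | p
      · have : ∀ l, {δ | IsCover δ γ ∧ IsHStrip δ l} = ∅ := by
          intro l
          ext δ
          simp only [Set.mem_ofPred_eq, Set.mem_empty_iff_false, iff_false, IsCover]
          rw [mem_YD] at hγ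
          omega
        simp [this, Nat.choose_eq_zero_of_lt (show n < s + 1 by omega)]
      · simp only [numSYT]
        rw [Finset.mul_sum]
        rw [← Finset.sum_congr rfl fun δ hδ =>
          ih p (s+1) δ (by omega) (Finset.mem_filter.1 hδ).1]
        simp_rw [Finset.sum_filter (p := IsHStrip _)]
        rw [Finset.sum_comm]
        refine Finset.sum_congr rfl fun l hl => ?_
        rw [← Finset.sum_filter, Finset.sum_const, smul_eq_mul]
        congr 1
        rw [← Set.ncard_coe_finset]
        congr 1
        ext α
        simp only [Finset.coe_filter, Finset.mem_filter, mem_YD, Set.mem_ofPred_eq, IsCover] at hγ ⊢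
        rw [hγ]
        simp only [Nat.add_right_cancel_iff]
        tauto
    have e3 : ∑ l ∈ YD n, (if IsHStrip γ l then 1 else 0) * numSYT n l
        = n.choose s * numSYT m γ := by
      rw [← ih m s γ (by omega) hγ, Finset.sum_filter]
      refine Finset.sum_congr rfl fun l hl => ?_
      split_ifs <;> simp
    rw [e1]
    simp_rw [ncard_cover_hstrip, add_mul]
    rw [Finset.sum_add_distrib, e2, e3, Nat.choose_succ_succ]
    ring

lemma isCover_isHStrip {γ β : YoungDiagram} (h : IsCover γ β) : IsHStrip γ β := by
  refine ⟨YoungDiagram.cells_subset_iff.2 h.1, ?_⟩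
  obtain ⟨c, hc, h⟩ := h.exists_insert
  rw [h]
  intro c₁ h1 c₂ h2 hne
  exfalso
  simp only [Finset.mem_sdiff, Finset.mem_insert] at h1 h2
  rcases h1 with ⟨rfl | h1, h1'⟩
  · rcases h2 with ⟨rfl | h2, h2'⟩
    · exact hne rfl
    · exact h2' h2
  · exact h1' h1

lemma sum_numSYT_cover (m : ℕ) (γ : YoungDiagram) (hγ : γ ∈ YD m) :
    ∑ β ∈ (YD (m+1)).filter (γ ≤ ·), numSYT (m+1) β = (m+1) * numSYT m γ := by
  have := sum_numSYT_hstrip (m+1) m 1 γ rfl hγ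
  rw [Nat.choose_one_right] at this
  rw [← this]
  congr 1
  ext β
  simp only [Finset.mem_filter, mem_YD] at hγ ⊢
  constructor
  · rintro ⟨h1, h2⟩
    exact ⟨h1, isCover_isHStrip ⟨h2, by omega⟩⟩
  · rintro ⟨h1, h2⟩
    exact ⟨h1, YoungDiagram.cells_subset_iff.1 h2.1⟩

/-- `∑ (f^γ)² = m!`, by going up and down one step in Young's lattice. -/
lemma sum_numSYT_sq (m : ℕ) : ∑ γ ∈ YD m, numSYT m γ ^ 2 = m.factorial := by
  induction m with
  | zero =>
    have : YD 0 = {⊥} := by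
      ext μ
      simp only [mem_YD, Finset.mem_singleton]
      constructor
      · intro h
        apply YoungDiagram.ext
        simpa using Finset.card_eq_zero.1 h
      · rintro rfl
        rfl
    simp [this, numSYT]
  | succ m ih =>
    rw [Nat.factorial_succ, ← ih, Finset.mul_sum]
    have : ∀ γ ∈ YD m, (m+1) * numSYT m γ ^ 2 =
        ∑ β ∈ (YD (m+1)).filter (γ ≤ ·), numSYT (m+1) β * numSYT m γ := by
      intro γ hγ
      rw [← Finset.sum_mul, sum_numSYT_cover m γ hγ]
      ring
    rw [Finset.sum_congr rfl this]
    simp_rw [Finset.sum_filter]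
    rw [Finset.sum_comm]
    refine Finset.sum_congr rfl fun β hβ => ?_
    rw [← Finset.sum_filter, ← Finset.mul_sum, sq]
    rfl

/-- The diagrams `γ` obtained from `β` by removing a box, such that `α / γ` is a horizontal strip,
where `γ` has `m` boxes. -/
def mids (m : ℕ) (β α : YoungDiagram) : Finset YoungDiagram :=
  (YD m).filter fun γ => γ ≤ β ∧ IsHStrip γ α

/-- Sum over the middle diagrams: each `γ` contributes `(m + 1) f^γ` on the side of `β` and
`C(m + 3, 3) f^γ` on the side of `α`. -/
lemma sum_mids (m : ℕ) : ∑ β ∈ YD (m+1), ∑ α ∈ YD (m+3),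
    (mids m β α).card * (numSYT (m+1) β * numSYT (m+3) α) =
    (m+1) * (m+3).choose 3 * m.factorial := by
  have h : ∀ γ ∈ YD m, (m+1) * (m+3).choose 3 * numSYT m γ ^ 2 =
      ∑ β ∈ YD (m+1), ∑ α ∈ YD (m+3),
        (if γ ≤ β ∧ IsHStrip γ α then 1 else 0) * (numSYT (m+1) β * numSYT (m+3) α) := by
    intro γ hγ
    have h1 := sum_numSYT_cover m γ hγ
    have h2 := sum_numSYT_hstrip (m+3) m 3 γ rfl hγ
    calc _ = ((m+1) * numSYT m γ) * ((m+3).choose 3 * numSYT m γ) := by ring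
      _ = _ := by
        rw [← h1, ← h2, Finset.sum_filter, Finset.sum_filter, Finset.sum_mul_sum]
        refine Finset.sum_congr rfl fun β _ => Finset.sum_congr rfl fun α _ => ?_
        by_cases a : γ ≤ β <;> by_cases b : IsHStrip γ α <;> simp [a, b]
  have h' := Finset.sum_congr (s₁ := YD m) rfl h
  rw [← Finset.mul_sum, sum_numSYT_sq] at h'
  rw [h', Finset.sum_comm (s := YD m)]
  refine Finset.sum_congr rfl fun β _ => ?_
  rw [Finset.sum_comm (s := YD m)]
  refine Finset.sum_congr rfl fun α _ => ?_
  rw [← Finset.sum_mul, mids, Finset.card_filter]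

/-- A nonempty diagram has a removable box, for instance a box `(i, j)` with `i + j` maximal. -/
lemma numSYT_pos : ∀ n μ, μ ∈ YD n → 0 < numSYT n μ := by
  intro n
  induction n with
  | zero => intro μ _; simp [numSYT]
  | succ n ih =>
    intro μ hμ
    have hne : μ.cells.Nonempty := by
      rw [← Finset.card_pos]
      rw [mem_YD] at hμ
      change 0 < μ.card
      omega
    obtain ⟨c, hc, hmax⟩ := μ.cells.exists_max_image (fun c => c.1 + c.2) hne
    let γ : YoungDiagram := ⟨μ.cells.erase c, by
      intro a b hab ha
      simp only [Finset.coe_erase, Set.mem_sdiff, Finset.mem_coe, Set.mem_singleton_iff] at ha ⊢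
      refine ⟨μ.isLowerSet hab ha.1, ?_⟩
      rintro rfl
      have h1 := hmax a ha.1
      obtain ⟨h2, h3⟩ := Prod.le_def.1 hab
      exact ha.2 (Prod.ext (by omega) (by omega))⟩
    have hγ : γ ∈ YD n := by
      rw [mem_YD] at *
      change (μ.cells.erase c).card = n
      rw [Finset.card_erase_of_mem hc]
      change μ.card - 1 = n
      omega
    have hle : γ ≤ μ := YoungDiagram.cells_subset_iff.1 (Finset.erase_subset _ _)
    rw [numSYT]
    exact Finset.sum_pos' (fun _ _ => Nat.zero_le _)
      ⟨γ, Finset.mem_filter.2 ⟨hγ, hle⟩, ih γ hγ⟩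

/-! ### Canonical tableaux, Young symmetrizers and the isotypic bound -/

/-- The position of an entry of the row-by-row filling with row lengths `l` is a box of the diagram. -/
lemma rowcol_lt (l : List ℕ) (m : ℕ) (hm : m < l.sum) :
    colOfAux l m < l.getD (rowOfAux l m) 0 := by
  induction l generalizing m with
  | nil => simp at hm
  | cons a t ih =>
    rw [List.sum_cons] at hm
    by_cases h : m < a
    · simp [rowOfAux, colOfAux, h]
    · simp only [rowOfAux, colOfAux, h, if_false, List.getD_cons_succ]
      exact ih _ (by omega)

lemma rowcol_inj (l : List ℕ) (m m' : ℕ) (hm : m < l.sum) (hm' : m' < l.sum)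
    (hr : rowOfAux l m = rowOfAux l m') (hc : colOfAux l m = colOfAux l m') : m = m' := by
  induction l generalizing m m' with
  | nil => simp at hm
  | cons a t ih =>
    rw [List.sum_cons] at hm hm'
    by_cases h : m < a <;> by_cases h' : m' < a <;>
      simp only [rowOfAux, colOfAux, h, h', if_true, if_false] at hr hc
    · exact hc
    · omega
    · omega
    · have := ih (m - a) (m' - a) (by omega) (by omega) (by omega) hc
      omega

lemma rowcol_surj (l : List ℕ) (i j : ℕ) (h : j < l.getD i 0) :
    ∃ m, m < l.sum ∧ rowOfAux l m = i ∧ colOfAux l m = j := by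
  induction l generalizing i with
  | nil => simp at h
  | cons a t ih =>
    cases i with
    | zero =>
      simp only [List.getD_cons_zero] at h
      exact ⟨j, by rw [List.sum_cons]; omega, by simp [rowOfAux, h], by simp [colOfAux, h]⟩
    | succ i =>
      simp only [List.getD_cons_succ] at h
      obtain ⟨m, h1, h2, h3⟩ := ih i h
      refine ⟨m + a, by rw [List.sum_cons]; omega, ?_, ?_⟩
      · simp [rowOfAux, h2]
      · simp [colOfAux, h3]

lemma rowLens_getD (μ : YoungDiagram) (i : ℕ) : μ.rowLens.getD i 0 = μ.rowLen i := by
  by_cases h : i < μ.rowLens.length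
  · rw [List.getD_eq_getElem _ _ h]
    simp [YoungDiagram.rowLens]
  · rw [List.getD_eq_default _ _ (by omega)]
    by_contra h0
    have h1 : (i, 0) ∈ μ := YoungDiagram.mem_iff_lt_rowLen.2 (by omega)
    have h2 := YoungDiagram.mem_iff_lt_colLen.1 h1
    rw [YoungDiagram.length_rowLens] at h
    omega

lemma rowcol_bijective (μ : YoungDiagram) : Function.Bijective
    (fun m : Fin μ.rowLens.sum => (⟨(rowIndex μ m, colIndex μ m), by
      rw [YoungDiagram.mem_cells, YoungDiagram.mem_iff_lt_rowLen, ← rowLens_getD]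
      exact rowcol_lt _ _ m.2⟩ : {c // c ∈ μ.cells})) := by
  constructor
  · intro m m' h
    simp only [Subtype.mk.injEq, Prod.mk.injEq] at h
    exact Fin.ext (rowcol_inj _ _ _ m.2 m'.2 h.1 h.2)
  · rintro ⟨⟨i, j⟩, h⟩
    rw [YoungDiagram.mem_cells, YoungDiagram.mem_iff_lt_rowLen, ← rowLens_getD] at h
    obtain ⟨m, h1, h2, h3⟩ := rowcol_surj _ _ _ h
    exact ⟨⟨m, h1⟩, by simp [rowIndex, colIndex, h2, h3]⟩

lemma rowLens_sum (μ : YoungDiagram) : μ.rowLens.sum = μ.card := by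
  have := Fintype.card_of_bijective (rowcol_bijective μ)
  simpa using this

/-- The canonical tableau of shape `μ`: the boxes are numbered row by row. -/
def canTab {n : ℕ} {μ : YoungDiagram} (h : μ.card = n) : Fin n ≃ {c // c ∈ μ.cells} :=
  (finCongr (by rw [rowLens_sum, h])).trans (Equiv.ofBijective _ (rowcol_bijective μ))

lemma canTab_row {n : ℕ} {μ : YoungDiagram} (h : μ.card = n) (m : Fin n) :
    (canTab h m).1.1 = rowIndex μ m := rfl

lemma canTab_col {n : ℕ} {μ : YoungDiagram} (h : μ.card = n) (m : Fin n) :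
    (canTab h m).1.2 = colIndex μ m := rfl

section Tableau

variable {X : Type} [Fintype X] {μ : YoungDiagram} (t : X ≃ {c // c ∈ μ.cells})

/-- In each column, a word injective on columns has at most as many letters below `k` as the
row word. -/
lemma col_count_le (w : X → ℕ) (hw : ∀ x y, (t x).1.2 = (t y).1.2 → w x = w y → x = y) (j k : ℕ) :
    (Finset.univ.filter fun x => (t x).1.2 = j ∧ w x < k).card ≤
      (Finset.univ.filter fun x => (t x).1.2 = j ∧ (t x).1.1 < k).card := by
  by_cases h : ∃ x, (t x).1.2 = j ∧ k ≤ (t x).1.1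
  · obtain ⟨x, hx, hk⟩ := h
    have h1 : (Finset.univ.filter fun x => (t x).1.2 = j ∧ w x < k).card ≤ (Finset.range k).card := by
      refine Finset.card_le_card_of_injOn w ?_ ?_
      · intro y hy
        simp at hy ⊢
        exact hy.2
      · intro y hy z hz h
        simp at hy hz
        exact hw y z (by rw [hy.1, hz.1]) h
    refine h1.trans ?_
    have hmem : ∀ i, i < k → (i, j) ∈ μ.cells := by
      intro i hi
      have hm : ((t x).1.1, (t x).1.2) ∈ μ := (YoungDiagram.mem_cells _).1 (t x).2
      rw [YoungDiagram.mem_cells]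
      exact μ.up_left_mem (i2 := (t x).1.1) (j2 := (t x).1.2) (by omega) (by omega) hm
    refine Finset.card_le_card_of_surjOn (fun y => (t y).1.1) ?_
    intro i hi
    simp only [Finset.coe_range, Set.mem_Iio] at hi
    exact ⟨t.symm ⟨(i, j), hmem i hi⟩, by simp [hi], by simp⟩
  · push Not at h
    refine Finset.card_le_card ?_
    intro y hy
    simp only [Finset.mem_filter, Finset.mem_univ, true_and] at hy ⊢
    exact ⟨hy.1, h y hy.1⟩

lemma count_fiber (p : X → Prop) [DecidablePred p] (hN : Finset ℕ) (h : ∀ x, (t x).1.2 ∈ hN) :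
    (Finset.univ.filter fun x => p x).card =
      ∑ j ∈ hN, (Finset.univ.filter fun x => (t x).1.2 = j ∧ p x).card := by
  rw [Finset.card_eq_sum_card_fiberwise (f := fun x => (t x).1.2) (t := hN) (fun x _ => h x)]
  refine Finset.sum_congr rfl fun j _ => ?_
  rw [Finset.filter_filter]
  congr 1
  ext x
  simp [and_comm]

/-- Dominance: a word injective on columns has at most as many letters below `k` as the row word. -/
lemma count_le (w : X → ℕ) (hw : ∀ x y, (t x).1.2 = (t y).1.2 → w x = w y → x = y) (k : ℕ) :
    (Finset.univ.filter fun x => w x < k).card ≤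
      (Finset.univ.filter fun x => (t x).1.1 < k).card := by
  have h : ∀ x, (t x).1.2 ∈ Finset.univ.image fun x => (t x).1.2 := fun x =>
    Finset.mem_image_of_mem _ (Finset.mem_univ _)
  rw [count_fiber t (fun x => w x < k) _ h, count_fiber t (fun x => (t x).1.1 < k) _ h]
  exact Finset.sum_le_sum fun j _ => col_count_le t w hw j k

/-- A word with the content of the row word which is injective on columns is obtained from the row
word by a permutation preserving the columns. -/
lemma exists_colPerm (w : X → ℕ) (hw : ∀ x y, (t x).1.2 = (t y).1.2 → w x = w y → x = y)
    (hc : ∀ k, (Finset.univ.filter fun x => w x < k).card =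
      (Finset.univ.filter fun x => (t x).1.1 < k).card) :
    ∃ c : Perm X, (∀ x, (t (c x)).1.2 = (t x).1.2) ∧ ∀ x, (t (c x)).1.1 = w x := by
  have h : ∀ x, (t x).1.2 ∈ Finset.univ.image fun x => (t x).1.2 := fun x =>
    Finset.mem_image_of_mem _ (Finset.mem_univ _)
  have heq : ∀ x k, (Finset.univ.filter fun y => (t y).1.2 = (t x).1.2 ∧ w y < k).card =
      (Finset.univ.filter fun y => (t y).1.2 = (t x).1.2 ∧ (t y).1.1 < k).card := by
    intro x k
    have := hc k
    rw [count_fiber t (fun x => w x < k) _ h, count_fiber t (fun x => (t x).1.1 < k) _ h] at this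
    exact (Finset.sum_eq_sum_iff_of_le fun j _ => col_count_le t w hw j k).1 this _ (h x)
  have hmem : ∀ x, (w x, (t x).1.2) ∈ μ.cells := by
    intro x
    have h1 := heq x (w x)
    have h2 := heq x (w x + 1)
    have h3 : (Finset.univ.filter fun y => (t y).1.2 = (t x).1.2 ∧ w y < w x).card <
        (Finset.univ.filter fun y => (t y).1.2 = (t x).1.2 ∧ w y < w x + 1).card := by
      refine Finset.card_lt_card (Finset.ssubset_iff_subset_ne.2 ⟨?_, ?_⟩)
      · intro y hy
        simp only [Finset.mem_filter, Finset.mem_univ, true_and] at hy ⊢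
        exact ⟨hy.1, by omega⟩
      · intro he
        have : x ∈ (Finset.univ.filter fun y => (t y).1.2 = (t x).1.2 ∧ w y < w x) := by
          rw [he]; simp
        simp at this
    rw [h1, h2] at h3
    obtain ⟨y, hy1, hy2⟩ := Finset.exists_mem_notMem_of_card_lt_card h3
    simp only [Finset.mem_filter, Finset.mem_univ, true_and, not_and, not_lt] at hy1 hy2
    have h4 := hy2 hy1.1
    have h5 : (t y).1 = (w x, (t x).1.2) := Prod.ext (by simp only; omega) hy1.1
    rw [← h5]
    exact (t y).2
  let c : X → X := fun x => t.symm ⟨(w x, (t x).1.2), hmem x⟩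
  have hcinj : Function.Injective c := by
    intro x y hxy
    have := t.symm.injective hxy
    simp only [Subtype.mk.injEq, Prod.mk.injEq] at this
    exact hw x y this.2 this.1
  exact ⟨Equiv.ofBijective c (Finite.injective_iff_bijective.1 hcinj), by simp [c], by simp [c]⟩

end Tableau

section GroupAlgebra

open MonoidAlgebra

variable {n : ℕ}

/-- The sum `∑_{σ ∈ H} χ(σ) σ` for a sign character `χ`. -/
def symz (H : Subgroup (Perm (Fin n))) (χ : Perm (Fin n) →* ℤˣ) :
    MonoidAlgebra ℂ (Perm (Fin n)) :=
  ∑ σ : Perm (Fin n), if σ ∈ H then ((χ σ : ℤ) : ℂ) • MonoidAlgebra.single σ (1 : ℂ) else 0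

lemma unit_mul_self (u : ℤˣ) : ((u : ℤ) : ℂ) * ((u : ℤ) : ℂ) = 1 := by
  rcases Int.units_eq_one_or u with h | h <;> simp [h]

lemma symz_mul_single (H : Subgroup (Perm (Fin n))) (χ : Perm (Fin n) →* ℤˣ) {q : Perm (Fin n)}
    (hq : q ∈ H) : symz H χ * single q 1 = ((χ q : ℤ) : ℂ) • symz H χ := by
  rw [symz, Finset.sum_mul, Finset.smul_sum, ← Equiv.sum_comp (Equiv.mulRight q)
    (fun σ => ((χ q : ℤ) : ℂ) • _)]
  refine Finset.sum_congr rfl fun σ _ => ?_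
  simp only [Equiv.coe_mulRight, H.mul_mem_cancel_right hq]
  split_ifs with h
  · rw [smul_mul_assoc, single_mul_single, smul_smul, map_mul, mul_one]
    congr 1
    push_cast
    rw [mul_comm, mul_assoc, unit_mul_self, mul_one]
  · simp

lemma single_mul_symz (H : Subgroup (Perm (Fin n))) (χ : Perm (Fin n) →* ℤˣ) {q : Perm (Fin n)}
    (hq : q ∈ H) : single q 1 * symz H χ = ((χ q : ℤ) : ℂ) • symz H χ := by
  rw [symz, Finset.mul_sum, Finset.smul_sum, ← Equiv.sum_comp (Equiv.mulLeft q)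
    (fun σ => ((χ q : ℤ) : ℂ) • _)]
  refine Finset.sum_congr rfl fun σ _ => ?_
  simp only [Equiv.coe_mulLeft, H.mul_mem_cancel_left hq]
  split_ifs with h
  · rw [mul_smul_comm, single_mul_single, smul_smul, map_mul, mul_one]
    congr 1
    push_cast
    rw [← mul_assoc, unit_mul_self, one_mul]
  · simp

/-- If `p g = g q` with `p ∈ H`, `q ∈ K` and the two characters differ on `p` and `q`, then the
sandwich of `g` between the two symmetrizers vanishes. -/
lemma symz_sandwich_zero (H K : Subgroup (Perm (Fin n))) (χ ψ : Perm (Fin n) →* ℤˣ)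
    {p q g : Perm (Fin n)} (hp : p ∈ H) (hq : q ∈ K) (hg : p * g = g * q) (hne : χ p ≠ ψ q) :
    symz H χ * single g 1 * symz K ψ = 0 := by
  have h1 : symz H χ * single p 1 * single g 1 * symz K ψ =
      symz H χ * single g 1 * (single q 1 * symz K ψ) := by
    have e : (single p 1 * single g 1 : MonoidAlgebra ℂ (Perm (Fin n))) =
        single g 1 * single q 1 := by
      rw [single_mul_single, single_mul_single, hg]
    rw [mul_assoc (symz H χ) (single p 1), e]
    simp only [mul_assoc]
  rw [symz_mul_single H χ hp, single_mul_symz K ψ hq, smul_mul_assoc, smul_mul_assoc,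
    mul_smul_comm, ← sub_eq_zero, ← sub_smul, smul_eq_zero] at h1
  refine h1.resolve_left ?_
  rw [sub_eq_zero]
  exact fun h => hne (Units.ext (by exact_mod_cast h))

/-- The signed sum over the column stabilizer. -/
def colAnti (n : ℕ) (μ : YoungDiagram) := symz (colStabilizer n μ) Perm.sign

/-- The sum over the row stabilizer. -/
def rowSym (n : ℕ) (μ : YoungDiagram) := symz (rowStabilizer n μ) 1

lemma youngSymmetrizer_eq (n : ℕ) (μ : YoungDiagram) :
    youngSymmetrizer n μ = colAnti n μ * rowSym n μ := by
  simp [youngSymmetrizer, colAnti, rowSym, symz]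

/-- Number of boxes in the first `k` rows. -/
def rowCount (n : ℕ) (μ : YoungDiagram) (k : ℕ) : ℕ :=
  (Finset.univ.filter fun m : Fin n => rowIndex μ m < k).card

lemma rowCount_comp (μ : YoungDiagram) (g : Perm (Fin n)) (k : ℕ) :
    (Finset.univ.filter fun m : Fin n => rowIndex μ (g m) < k).card = rowCount n μ k := by
  rw [rowCount]
  refine Finset.card_equiv g ?_
  simp

lemma rowCount_succ {μ : YoungDiagram} (h : μ.card = n) (k : ℕ) :
    rowCount n μ (k + 1) = rowCount n μ k + μ.rowLen k := by
  have : μ.rowLen k = (Finset.univ.filter fun m : Fin n => rowIndex μ m = k).card := by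
    rw [YoungDiagram.rowLen_eq_card]
    symm
    refine Finset.card_bij (fun m _ => (canTab h m).1) ?_ ?_ ?_
    · intro m hm
      rw [YoungDiagram.mem_row_iff]
      simp only [Finset.mem_filter, Finset.mem_univ, true_and] at hm
      exact ⟨(YoungDiagram.mem_cells _).1 (canTab h m).2, hm⟩
    · intro a _ b _ hab
      exact (canTab h).injective (Subtype.ext hab)
    · intro c hc
      rw [YoungDiagram.mem_row_iff] at hc
      refine ⟨(canTab h).symm ⟨c, (YoungDiagram.mem_cells _).2 hc.1⟩, ?_, by simp⟩
      rw [Finset.mem_filter]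
      refine ⟨Finset.mem_univ _, ?_⟩
      rw [← canTab_row h]
      simp [hc.2]
  rw [this, rowCount, rowCount, ← Finset.card_union_of_disjoint]
  · congr 1
    ext m
    simp only [Finset.mem_filter, Finset.mem_univ, true_and, Finset.mem_union]
    omega
  · rw [Finset.disjoint_filter]
    intro m _ h1 h2
    omega

lemma eq_of_rowCount {μ ν : YoungDiagram} (hμ : μ.card = n) (hν : ν.card = n)
    (h : ∀ k, rowCount n μ k = rowCount n ν k) : μ = ν := by
  apply rowLen_injective
  funext k
  have h1 := rowCount_succ hμ k
  have h2 := rowCount_succ hν k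
  rw [h, h] at h1
  omega

lemma colInj_of_ne_zero {l μ : YoungDiagram} {g : Perm (Fin n)}
    (h : colAnti n l * single g 1 * rowSym n μ ≠ 0) (x y : Fin n)
    (hxy : colIndex l x = colIndex l y) (hr : rowIndex μ (g⁻¹ x) = rowIndex μ (g⁻¹ y)) : x = y := by
  by_contra hne
  refine h (symz_sandwich_zero _ _ _ _ (p := swap x y) (q := swap (g⁻¹ x) (g⁻¹ y)) ?_ ?_ ?_ ?_)
  · intro m
    by_cases h1 : m = x
    · subst h1; simp [hxy]
    · by_cases h2 : m = y
      · subst h2; simp [hxy]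
      · rw [Equiv.swap_apply_of_ne_of_ne h1 h2]
  · intro m
    by_cases h1 : m = g⁻¹ x
    · subst h1; rw [swap_apply_left, hr]
    · by_cases h2 : m = g⁻¹ y
      · subst h2; rw [swap_apply_right, hr]
      · rw [Equiv.swap_apply_of_ne_of_ne h1 h2]
  · rw [Equiv.mul_swap_eq_swap_mul]
    simp
  · rw [Perm.sign_swap hne, MonoidHom.one_apply]
    decide

lemma rowInj_of_ne_zero {l μ : YoungDiagram} {g : Perm (Fin n)}
    (h : rowSym n l * single g 1 * colAnti n μ ≠ 0) (x y : Fin n)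
    (hxy : colIndex μ x = colIndex μ y) (hr : rowIndex l (g x) = rowIndex l (g y)) : x = y := by
  by_contra hne
  refine h (symz_sandwich_zero _ _ _ _ (q := swap x y) (p := swap (g x) (g y)) ?_ ?_ ?_ ?_)
  · intro m
    by_cases h1 : m = g x
    · subst h1; rw [swap_apply_left, hr]
    · by_cases h2 : m = g y
      · subst h2; rw [swap_apply_right, hr]
      · rw [Equiv.swap_apply_of_ne_of_ne h1 h2]
  · intro m
    by_cases h1 : m = x
    · subst h1; simp [hxy]
    · by_cases h2 : m = y
      · subst h2; simp [hxy]
      · rw [Equiv.swap_apply_of_ne_of_ne h1 h2]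
  · rw [Equiv.mul_swap_eq_swap_mul]
  · rw [Perm.sign_swap hne, MonoidHom.one_apply]
    decide

lemma mul_mul_induction {a b : MonoidAlgebra ℂ (Perm (Fin n))} {S : Submodule ℂ (MonoidAlgebra ℂ (Perm (Fin n)))}
    (h : ∀ g, a * single g 1 * b ∈ S) (x : MonoidAlgebra ℂ (Perm (Fin n))) : a * x * b ∈ S := by
  induction x using MonoidAlgebra.induction_linear with
  | zero => simp
  | add f g hf hg => rw [mul_add, add_mul]; exact S.add_mem hf hg
  | single g r =>
    have : (single g r : MonoidAlgebra ℂ (Perm (Fin n))) = r • single g 1 := by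
      rw [smul_single, smul_eq_mul, mul_one]
    rw [this, mul_smul_comm, smul_mul_assoc]
    exact S.smul_mem _ (h g)

/-- Young symmetrizers of different shapes annihilate each other. -/
lemma young_mul_young_ne {l μ : YoungDiagram} (hl : l.card = n) (hμ : μ.card = n) (hne : l ≠ μ)
    (x : MonoidAlgebra ℂ (Perm (Fin n))) :
    youngSymmetrizer n l * x * youngSymmetrizer n μ = 0 := by
  rw [youngSymmetrizer_eq, youngSymmetrizer_eq]
  have e : colAnti n l * rowSym n l * x * (colAnti n μ * rowSym n μ) =
    colAnti n l * (rowSym n l * x * colAnti n μ) * rowSym n μ := by simp only [mul_assoc]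
  rw [e]
  by_cases h1 : ∀ g, colAnti n l * single g 1 * rowSym n μ = 0
  · have := mul_mul_induction (S := ⊥) (fun g => (Submodule.mem_bot ℂ).2 (h1 g))
      (rowSym n l * x * colAnti n μ)
    simpa using this
  · by_cases h2 : ∀ g, rowSym n l * single g 1 * colAnti n μ = 0
    · have := mul_mul_induction (S := ⊥) (fun g => (Submodule.mem_bot ℂ).2 (h2 g)) x
      rw [Submodule.mem_bot] at this
      rw [this]; simp
    · exfalso
      push Not at h1 h2
      obtain ⟨g, hg⟩ := h1
      obtain ⟨g', hg'⟩ := h2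
      refine hne (eq_of_rowCount hl hμ fun k => le_antisymm ?_ ?_)
      · have := count_le (canTab hμ) (fun x => rowIndex l (g' x))
          (fun x y h h' => rowInj_of_ne_zero hg' x y h h') k
        rw [rowCount_comp] at this
        exact this
      · have := count_le (canTab hl) (fun x => rowIndex μ (g⁻¹ x))
          (fun x y h h' => colInj_of_ne_zero hg x y h h') k
        rw [rowCount_comp] at this
        exact this

/-- `c x c` is a multiple of `c` for the Young symmetrizer `c` and every `x` of the group algebra. -/
lemma young_mul_young_self {l : YoungDiagram} (hl : l.card = n)
    (x : MonoidAlgebra ℂ (Perm (Fin n))) :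
    ∃ s : ℂ, youngSymmetrizer n l * x * youngSymmetrizer n l = s • youngSymmetrizer n l := by
  have key : ∀ y, colAnti n l * y * rowSym n l ∈ Submodule.span ℂ {youngSymmetrizer n l} := by
    refine mul_mul_induction fun g => ?_
    by_cases h : colAnti n l * single g 1 * rowSym n l = 0
    · rw [h]; exact zero_mem _
    · obtain ⟨c, hc1, hc2⟩ := exists_colPerm (canTab hl) (fun x => rowIndex l (g⁻¹ x))
        (fun x y h1 h2 => colInj_of_ne_zero h x y h1 h2) (fun k => by
          rw [rowCount_comp]; rfl)
      have hcC : c ∈ colStabilizer n l := hc1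
      have hcR : c * g ∈ rowStabilizer n l := by
        intro m
        have := hc2 (g m)
        rw [canTab_row] at this
        simpa using this
      have e : (single g 1 : MonoidAlgebra ℂ (Perm (Fin n))) = single c⁻¹ 1 * single (c * g) 1 := by
        rw [single_mul_single]; simp
      rw [e, ← mul_assoc, mul_assoc, colAnti, rowSym, symz_mul_single _ _ (inv_mem hcC),
        single_mul_symz _ _ hcR, smul_mul_smul_comm]
      refine Submodule.smul_mem _ _ (Submodule.subset_span ?_)
      rw [youngSymmetrizer_eq]; rfl
  have := key (rowSym n l * x * colAnti n l)
  obtain ⟨s, hs⟩ := Submodule.mem_span_singleton.1 this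
  refine ⟨s, ?_⟩
  rw [hs, youngSymmetrizer_eq]
  simp only [mul_assoc]

/-- The conjugate-linear anti-involution `∑ a_g g ↦ ∑ conj(a_g) g⁻¹` of the group algebra. -/
def gstar (a : MonoidAlgebra ℂ (Perm (Fin n))) : MonoidAlgebra ℂ (Perm (Fin n)) :=
  ∑ g : Perm (Fin n), single g⁻¹ ((starRingEnd ℂ) (a.coeff g))

lemma eq_sum_single (a : MonoidAlgebra ℂ (Perm (Fin n))) : a = ∑ g, single g (a.coeff g) := by
  conv_lhs => rw [← sum_coeff_single a]
  rw [Finsupp.sum_fintype]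
  simp

lemma gstar_mul_self_coeff (a : MonoidAlgebra ℂ (Perm (Fin n))) :
    (gstar a * a).coeff 1 = ∑ g, ((‖a.coeff g‖ ^ 2 : ℝ) : ℂ) := by
  rw [gstar, Finset.sum_mul, coeff_sum, Finset.sum_apply']
  refine Finset.sum_congr rfl fun g _ => ?_
  rw [coeff_single_mul_eq_mul_coeff g]
  · rw [mul_comm, Complex.mul_conj, Complex.normSq_eq_norm_sq]
  · intro m _
    exact ⟨fun h => by simpa using (inv_mul_eq_one.1 h).symm, fun h => by simp [h]⟩

lemma gstar_mul_self_eq_zero {a : MonoidAlgebra ℂ (Perm (Fin n))} (h : gstar a * a = 0) : a = 0 := by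
  have h1 := gstar_mul_self_coeff a
  rw [h] at h1
  have h2 : (∑ g, ‖a.coeff g‖ ^ 2 : ℝ) = 0 := by
    have : ((∑ g, ‖a.coeff g‖ ^ 2 : ℝ) : ℂ) = 0 := by
      rw [Complex.ofReal_sum, ← h1]; simp
    exact_mod_cast this
  rw [Finset.sum_eq_zero_iff_of_nonneg (fun _ _ => by positivity)] at h2
  rw [← coeff_eq_zero]
  ext g
  have := h2 g (Finset.mem_univ _)
  simpa using this

lemma gstar_gstar_mul (a : MonoidAlgebra ℂ (Perm (Fin n))) :
    gstar (gstar a * a) = gstar a * a := by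
  have hadd : ∀ (s : Finset (Perm (Fin n) × Perm (Fin n)))
      (f : Perm (Fin n) × Perm (Fin n) → MonoidAlgebra ℂ (Perm (Fin n))),
      gstar (∑ i ∈ s, f i) = ∑ i ∈ s, gstar (n := n) (f i) := by
    intro s f
    simp only [gstar]
    rw [Finset.sum_comm]
    refine Finset.sum_congr rfl fun g _ => ?_
    rw [coeff_sum, Finset.sum_apply', map_sum]
    have := map_sum (singleAddHom g⁻¹ : ℂ →+ MonoidAlgebra ℂ (Perm (Fin n)))
      (fun i => (starRingEnd ℂ) ((f i).coeff g)) s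
    exact this
  have hsingle : ∀ g (r : ℂ), gstar (n := n) (single g r) = single g⁻¹ ((starRingEnd ℂ) r) := by
    intro g r
    rw [gstar, Finset.sum_eq_single g]
    · simp
    · intro b _ hb
      rw [coeff_single, Finsupp.single_apply, if_neg hb.symm]
      simp
    · simp
  have e : gstar a * a = ∑ i : Perm (Fin n) × Perm (Fin n),
      single (i.1⁻¹ * i.2) ((starRingEnd ℂ) (a.coeff i.1) * a.coeff i.2) := by
    conv_lhs => rw [gstar, eq_sum_single a]
    rw [Finset.sum_mul_sum, Fintype.sum_prod_type]
    simp only [single_mul_single, ← eq_sum_single]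
  rw [e, hadd, ← Equiv.sum_comp (Equiv.prodComm _ _)]
  refine Finset.sum_congr rfl fun i _ => ?_
  rw [hsingle]
  simp [mul_comm]

/-- Semiprimeness of the group algebra, from positivity of `a ↦ (gstar a * a).coeff 1`. -/
lemma gstar_triple {a : MonoidAlgebra ℂ (Perm (Fin n))} (h : a * gstar a * a = 0) : a = 0 := by
  apply gstar_mul_self_eq_zero
  apply gstar_mul_self_eq_zero
  rw [gstar_gstar_mul]
  have : gstar a * a * (gstar a * a) = gstar a * (a * gstar a * a) := by simp only [mul_assoc]
  rw [this, h, mul_zero]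

/-- The Young symmetrizer is von Neumann regular. It has the form `c b c` with `b` a multiple of
`gstar c`; this avoids computing the scalar in `c² = r c`. -/
lemma exists_young_regular {l : YoungDiagram} (hl : l.card = n) :
    ∃ b, youngSymmetrizer n l * b * youngSymmetrizer n l = youngSymmetrizer n l := by
  set c := youngSymmetrizer n l with hc
  obtain ⟨s, hs⟩ := young_mul_young_self hl (gstar c)
  rw [← hc] at hs
  by_cases h : s = 0
  · have : c = 0 := gstar_triple (by rw [hs, h, zero_smul])
    exact ⟨0, by rw [this]; simp⟩
  · refine ⟨s⁻¹ • gstar c, ?_⟩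
    rw [mul_smul_comm, smul_mul_assoc, hs, smul_smul, inv_mul_cancel₀ h, one_smul]

/-- The Specht module as a complex subspace of the group algebra. -/
abbrev spechtSub (n : ℕ) (l : YoungDiagram) : Submodule ℂ (MonoidAlgebra ℂ (Perm (Fin n))) :=
  (SpechtIdeal n l).restrictScalars ℂ

lemma mem_spechtSub {l : YoungDiagram} {a : MonoidAlgebra ℂ (Perm (Fin n))} :
    a ∈ spechtSub n l ↔ ∃ b, a = b * youngSymmetrizer n l := by
  rw [Submodule.restrictScalars_mem, SpechtIdeal, Submodule.mem_span_singleton]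
  simp only [smul_eq_mul, eq_comm]

/-- An element of the Specht ideal killed by `c x` for all `x` vanishes. -/
lemma eq_zero_of_young_mul {l : YoungDiagram} {a : MonoidAlgebra ℂ (Perm (Fin n))}
    (ha : a ∈ spechtSub n l) (h : ∀ b, youngSymmetrizer n l * b * a = 0) : a = 0 := by
  apply gstar_triple
  obtain ⟨b, hb⟩ := mem_spechtSub.1 ha
  have := h (gstar a)
  nth_rw 1 [hb]
  rw [mul_assoc, mul_assoc, ← mul_assoc _ (gstar a), this, mul_zero]

instance : Module.Finite ℂ (MonoidAlgebra ℂ (Perm (Fin n))) :=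
  Module.Finite.equiv (MonoidAlgebra.coeffLinearEquiv ℂ).symm

/-- The isotypic decomposition bound `∑ dim S^λ ⬝ dim (c_λ U) ≤ dim U`. For each `λ` and each vector
`v` of a basis of `c_λ U` there is a copy `x ↦ x b_λ v` of the Specht ideal, where
`c_λ b_λ c_λ = c_λ`, and the sum of these copies is direct. -/
lemma sum_finrank_le {M : Type} [AddCommGroup M] [Module ℂ M] [Module.Finite ℂ M]
    (Φ : MonoidAlgebra ℂ (Perm (Fin n)) →ₐ[ℂ] Module.End ℂ M) (U : Submodule ℂ M)
    (hU : ∀ a, ∀ u ∈ U, Φ a u ∈ U) :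
    ∑ l ∈ YD n, Module.finrank ℂ (spechtSub n l) *
      Module.finrank ℂ (U.map (Φ (youngSymmetrizer n l))) ≤ Module.finrank ℂ U := by
  rw [← Finset.sum_coe_sort]
  have hcard : ∀ l : {l // l ∈ YD n}, l.1.card = n := fun l => mem_YD.1 l.2
  choose B hB using fun l : {l // l ∈ YD n} => exists_young_regular (hcard l)
  let d : {l // l ∈ YD n} → ℕ := fun l => Module.finrank ℂ (U.map (Φ (youngSymmetrizer n l)))
  let bas : ∀ l : {l // l ∈ YD n}, Module.Basis (Fin (d l)) ℂ (U.map (Φ (youngSymmetrizer n l))) :=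
    fun l => Module.finBasis ℂ _
  let T : (∀ l : {l // l ∈ YD n}, Fin (d l) → spechtSub n l.1) →ₗ[ℂ] M :=
    ∑ l, ∑ j, (LinearMap.applyₗ (bas l j).1) ∘ₗ Φ.toLinearMap ∘ₗ
      (LinearMap.mulRight ℂ (B l)) ∘ₗ (spechtSub n l.1).subtype ∘ₗ (LinearMap.proj j) ∘ₗ
      (LinearMap.proj l)
  have hT : ∀ v, T v = ∑ l, ∑ j, Φ ((v l j).1 * B l) (bas l j).1 := by
    intro v
    simp [T]
  have hmem : ∀ v, T v ∈ U := by
    intro v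
    rw [hT]
    refine Submodule.sum_mem _ fun l _ => Submodule.sum_mem _ fun j _ => hU _ _ ?_
    obtain ⟨u, hu, hu'⟩ := (bas l j).2
    rw [← hu']
    exact hU _ _ hu
  have hinj : Function.Injective (T.codRestrict U hmem) := by
    rw [← LinearMap.ker_eq_bot, LinearMap.ker_eq_bot']
    intro v hv
    have hv0 : T v = 0 := congrArg Subtype.val hv
    funext l j
    apply Subtype.ext
    refine eq_zero_of_young_mul (v l j).2 fun b => ?_
    choose a ha using fun j => mem_spechtSub.1 (v l j).2
    choose s hs using fun j => young_mul_young_self (hcard l) (b * a j)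
    have h1 : ∑ j, s j • (bas l j) = 0 := by
      apply Subtype.ext
      have h2 : Φ (youngSymmetrizer n l * b) (T v) = 0 := by rw [hv0, map_zero]
      rw [hT, map_sum, Finset.sum_eq_single l] at h2
      · rw [map_sum] at h2
        rw [Submodule.coe_sum, Submodule.coe_zero, ← h2]
        refine Finset.sum_congr rfl fun j _ => ?_
        obtain ⟨u, hu, hu'⟩ := (bas l j).2
        rw [Submodule.coe_smul, ← hu', ← Module.End.mul_apply, ← Module.End.mul_apply, ← map_mul,
          ← map_mul, ← LinearMap.smul_apply, ← map_smul]
        congr 2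
        rw [ha j]
        calc s j • youngSymmetrizer n l.1 = s j • (youngSymmetrizer n l.1 * B l * youngSymmetrizer n l.1) := by rw [hB]
          _ = (s j • youngSymmetrizer n l.1) * B l * youngSymmetrizer n l.1 := by
            rw [smul_mul_assoc, smul_mul_assoc]
          _ = _ := by
            rw [← hs j]; simp only [mul_assoc]
      · intro l' _ hne
        rw [map_sum]
        refine Finset.sum_eq_zero fun j _ => ?_
        obtain ⟨a', ha'⟩ := mem_spechtSub.1 (v l' j).2
        rw [← Module.End.mul_apply, ← map_mul, ha']
        have : youngSymmetrizer n l.1 * b * (a' * youngSymmetrizer n l'.1 * B l') =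
          (youngSymmetrizer n l.1 * (b * a') * youngSymmetrizer n l'.1) * B l' := by
          simp only [mul_assoc]
        rw [this, young_mul_young_ne (hcard l) (hcard l') (fun h => hne (Subtype.ext h.symm))]
        simp
      · simp
    have h3 := Fintype.linearIndependent_iff.1 (bas l).linearIndependent s h1 j
    rw [ha j, ← mul_assoc, mul_assoc (youngSymmetrizer n l.1), hs, h3, zero_smul]
  have := LinearMap.finrank_le_finrank_of_injective hinj
  rw [Module.finrank_pi_fintype] at this
  refine le_trans (le_of_eq ?_) this
  refine Finset.sum_congr rfl fun l _ => ?_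
  rw [Module.finrank_pi_fintype, Finset.sum_const, Finset.card_univ, Fintype.card_fin, smul_eq_mul,
    mul_comm]

end GroupAlgebra

/-! ### Polytabloids and a lower bound for the dimension of Specht modules -/

section Words

variable {n : ℕ} {μ γ : YoungDiagram}

/-- The polytabloid of a tableau `t`: the signed sum, over the column permutations of `t`, of the
indicators of the resulting tabloids. A tabloid is encoded by the word listing the row of each
entry. -/
def polytab (t : Fin n ≃ {c // c ∈ μ.cells}) : (Fin n → ℕ) → ℂ := fun w =>
  ∑ c : Perm (Fin n), if (∀ x, (t (c x)).1.2 = (t x).1.2) ∧ (∀ x, (t (c x)).1.1 = w x)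
    then ((Perm.sign c : ℤ) : ℂ) else 0

/-- The span of the polytabloids of shape `μ`. -/
def wordSpecht (n : ℕ) (μ : YoungDiagram) : Submodule ℂ ((Fin n → ℕ) → ℂ) :=
  Submodule.span ℂ (Set.range fun t : Fin n ≃ {c // c ∈ μ.cells} => polytab t)

instance : Module.Finite ℂ (wordSpecht n μ) :=
  FiniteDimensional.span_of_finite ℂ (Set.finite_range _)

/-- The part of a function on words supported on words with last letter `i`. -/
def slice (n i : ℕ) : ((Fin (n + 1) → ℕ) → ℂ) →ₗ[ℂ] ((Fin n → ℕ) → ℂ) where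
  toFun u w := u (Fin.snoc (α := fun _ => ℕ) w i)
  map_add' _ _ := rfl
  map_smul' _ _ := rfl

/-- A tableau of shape `γ` extends to one of shape `γ ∪ {b}` with the new largest entry in `b`. -/
lemma exists_extend_tab {b : ℕ × ℕ} (hb : b ∉ γ.cells) (hμ : μ.cells = insert b γ.cells)
    (t' : Fin n ≃ {c // c ∈ γ.cells}) :
    ∃ t : Fin (n + 1) ≃ {c // c ∈ μ.cells}, (t (Fin.last n)).1 = b ∧
      ∀ x, (t (Fin.castSucc x)).1 = (t' x).1 := by
  have hsub : ∀ c, c ∈ γ.cells → c ∈ μ.cells := fun c hc => by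
    rw [hμ]; exact Finset.mem_insert_of_mem hc
  have hbm : b ∈ μ.cells := by rw [hμ]; exact Finset.mem_insert_self _ _
  let f : Fin (n + 1) → {c // c ∈ μ.cells} :=
    Fin.lastCases ⟨b, hbm⟩ (fun x => ⟨(t' x).1, hsub _ (t' x).2⟩)
  have f1 : f (Fin.last n) = ⟨b, hbm⟩ := by simp [f]
  have f2 : ∀ x, f (Fin.castSucc x) = ⟨(t' x).1, hsub _ (t' x).2⟩ := by simp [f]
  have hf : Function.Bijective f := by
    constructor
    · intro x y hxy
      induction x using Fin.lastCases with
      | last =>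
        induction y using Fin.lastCases with
        | last => rfl
        | cast y =>
          rw [f1, f2, Subtype.mk.injEq] at hxy
          exact absurd (hxy ▸ (t' y).2) hb
      | cast x =>
        induction y using Fin.lastCases with
        | last =>
          rw [f1, f2, Subtype.mk.injEq] at hxy
          exact absurd (hxy ▸ (t' x).2) hb
        | cast y =>
          rw [f2, f2, Subtype.mk.injEq] at hxy
          rw [t'.injective (Subtype.ext hxy)]
    · rintro ⟨c, hc⟩
      have hc' := hc
      rw [hμ, Finset.mem_insert] at hc'
      rcases hc' with rfl | h
      · exact ⟨_, f1⟩
      · exact ⟨(t'.symm ⟨c, h⟩).castSucc, by rw [f2]; simp⟩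
  exact ⟨Equiv.ofBijective f hf, by simp [f1], by simp [f2]⟩

/-- A removable box is the lowest box of its column. -/
lemma removable_bottom {b : ℕ × ℕ} (hb : b ∉ γ.cells) (hμ : μ.cells = insert b γ.cells)
    {c : ℕ × ℕ} (hc : c ∈ μ.cells) (h2 : c.2 = b.2) : c.1 ≤ b.1 := by
  by_contra hlt
  rw [hμ, Finset.mem_insert] at hc
  rcases hc with rfl | h
  · omega
  · apply hb
    have hm : (c.1, c.2) ∈ γ := (YoungDiagram.mem_cells _).1 h
    rw [YoungDiagram.mem_cells]
    exact γ.up_left_mem (i1 := b.1) (j1 := b.2) (i2 := c.1) (j2 := c.2) (by omega) (by omega) hm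

/-- A removable box is determined by its row. -/
lemma removable_row_inj {γ' : YoungDiagram} {b b' : ℕ × ℕ} (hb : b ∉ γ.cells)
    (hμ : μ.cells = insert b γ.cells) (hb' : b' ∉ γ'.cells) (hμ' : μ.cells = insert b' γ'.cells)
    (h : b.1 = b'.1) : γ = γ' := by
  apply rowLen_injective
  funext j
  have h1 := rowLen_of_insert hb hμ j
  have h2 := rowLen_of_insert hb' hμ' j
  rw [h] at h1
  omega

/-- If the last entry lies in the removable box `b`, no column permutation moves it below the row
of `b`. -/
lemma slice_polytab_zero {b : ℕ × ℕ} (hb : b ∉ γ.cells) (hμ : μ.cells = insert b γ.cells)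
    {t : Fin (n + 1) ≃ {c // c ∈ μ.cells}} (h1 : (t (Fin.last n)).1 = b) {i : ℕ} (hi : b.1 < i) :
    slice n i (polytab t) = 0 := by
  funext w
  refine Finset.sum_eq_zero fun c _ => if_neg ?_
  rintro ⟨hc, hw⟩
  have h2 := hw (Fin.last n)
  rw [Fin.snoc_last] at h2
  have h3 := removable_bottom hb hμ (t (c (Fin.last n))).2 (by rw [hc, h1])
  omega

/-- If the last entry lies in the removable box `b`, the column permutations keeping it in its row
are those fixing it, so slicing removes the box `b` from the polytabloid. -/
lemma slice_polytab {b : ℕ × ℕ} {t : Fin (n + 1) ≃ {c // c ∈ μ.cells}} {t' : Fin n ≃ {c // c ∈ γ.cells}}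
    (h1 : (t (Fin.last n)).1 = b) (h2 : ∀ x, (t (Fin.castSucc x)).1 = (t' x).1) :
    slice n b.1 (polytab t) = polytab t' := by
  funext w
  symm
  show ∑ c : Perm (Fin n), _ = ∑ c : Perm (Fin (n + 1)), _
  let ι : Perm (Fin n) → Perm (Fin (n + 1)) := fun e =>
    e.viaFintypeEmbedding (Fin.castSuccEmb : Fin n ↪ Fin (n + 1))
  have ι1 : ∀ e x, ι e (Fin.castSucc x) = Fin.castSucc (e x) := fun e x =>
    Perm.viaFintypeEmbedding_apply_image e _ x
  have ι2 : ∀ e, ι e (Fin.last n) = Fin.last n := fun e => by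
    apply Perm.viaFintypeEmbedding_apply_notMem_range
    rintro ⟨x, hx⟩
    exact absurd hx (Fin.castSucc_ne_last x)
  have hiff : ∀ e, ((∀ x, (t' (e x)).1.2 = (t' x).1.2) ∧ (∀ x, (t' (e x)).1.1 = w x)) ↔
      ((∀ x, (t (ι e x)).1.2 = (t x).1.2) ∧
        (∀ x, (t (ι e x)).1.1 = (Fin.snoc (α := fun _ => ℕ) w b.1 : Fin (n + 1) → ℕ) x)) := by
    intro e
    simp only [Fin.forall_fin_succ', ι1, ι2, h2, h1, Fin.snoc_castSucc, Fin.snoc_last, and_true]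
  refine Finset.sum_bij_ne_zero (fun e _ _ => ι e) (fun _ _ _ => Finset.mem_univ _) ?_ ?_ ?_
  · intro e _ _ e' _ _ h
    ext x : 1
    have := congrArg (fun p => p (Fin.castSucc x)) h
    simp only [ι1] at this
    exact Fin.castSucc_injective _ this
  · intro c _ hc
    have hcc : (∀ x, (t (c x)).1.2 = (t x).1.2) ∧
        (∀ x, (t (c x)).1.1 = (Fin.snoc (α := fun _ => ℕ) w b.1 : Fin (n + 1) → ℕ) x) := by
      by_contra h
      exact hc (if_neg h)
    have hl : c (Fin.last n) = Fin.last n := by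
      apply t.injective
      apply Subtype.ext
      apply Prod.ext
      · rw [hcc.2, Fin.snoc_last, h1]
      · rw [hcc.1]
    have hne : ∀ x : Fin n, c x.castSucc ≠ Fin.last n := fun x hx => by
      rw [← hl] at hx
      exact Fin.castSucc_ne_last x (c.injective hx)
    let f : Fin n → Fin n := fun x => (c x.castSucc).castPred (hne x)
    have hf : Function.Injective f := by
      intro x y hxy
      have := congrArg Fin.castSucc hxy
      simp only [f, Fin.castSucc_castPred] at this
      exact Fin.castSucc_injective _ (c.injective this)
    let e : Perm (Fin n) := Equiv.ofBijective f (Finite.injective_iff_bijective.1 hf)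
    have he : ι e = c := by
      ext x : 1
      induction x using Fin.lastCases with
      | last => rw [ι2, hl]
      | cast x => rw [ι1]; simp [e, f]
    refine ⟨e, Finset.mem_univ _, ?_, he⟩
    rw [if_pos ((hiff e).2 (by rw [he]; exact hcc))]
    rcases Int.units_eq_one_or (Perm.sign e) with h | h <;> simp [h]
  · intro e _ _
    rw [if_congr (hiff e) rfl rfl]
    simp only [ι, Perm.viaFintypeEmbedding_sign]

/-- A linear section over `Q` of a linear map `f`, with values in `P`. It exists because `f` maps `P`
onto a subspace containing `Q`. -/
lemma exists_section {V V' : Type*} [AddCommGroup V] [Module ℂ V] [AddCommGroup V'] [Module ℂ V']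
    (f : V →ₗ[ℂ] V') (P : Submodule ℂ V) (Q : Submodule ℂ V') (h : Q ≤ P.map f) :
    ∃ S : Q →ₗ[ℂ] V, ∀ u, S u ∈ P ∧ f (S u) = u := by
  obtain ⟨s, hs⟩ := LinearMap.exists_rightInverse_of_surjective (f.submoduleMap P)
    (LinearMap.range_eq_top.2 (f.submoduleMap_surjective P))
  refine ⟨P.subtype ∘ₗ s ∘ₗ Submodule.inclusion h, fun u => ⟨(s _).2, ?_⟩⟩
  have := congrArg Subtype.val (LinearMap.congr_fun hs (Submodule.inclusion h u))
  simpa using this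

/-- Branching bound for the polytabloid spaces. Each polytabloid of shape `γ` lifts to one of shape
`μ`; the lifts for distinct `γ` are independent, because slicing at the lowest removable row that
occurs isolates one of them. -/
lemma wordSpecht_branching (hμ : μ.card = n + 1) :
    ∑ γ ∈ (YD n).filter (· ≤ μ), Module.finrank ℂ (wordSpecht n γ) ≤
      Module.finrank ℂ (wordSpecht (n + 1) μ) := by
  rw [← Finset.sum_coe_sort]
  have hex : ∀ γ : {γ // γ ∈ (YD n).filter (· ≤ μ)},
      ∃ b, b ∉ γ.1.cells ∧ μ.cells = insert b γ.1.cells := fun γ => by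
    have h := Finset.mem_filter.1 γ.2
    exact IsCover.exists_insert ⟨h.2, by rw [mem_YD.1 h.1, hμ]⟩
  choose b hb hbμ using hex
  let P : ℕ → Submodule ℂ ((Fin (n + 1) → ℕ) → ℂ) := fun i =>
    wordSpecht (n + 1) μ ⊓ ⨅ j : {j // i < j}, LinearMap.ker (slice n j)
  have hle : ∀ γ : {γ // γ ∈ (YD n).filter (· ≤ μ)},
      wordSpecht n γ.1 ≤ (P (b γ).1).map (slice n (b γ).1) := by
    intro γ
    rw [wordSpecht, Submodule.span_le]
    rintro _ ⟨t', rfl⟩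
    obtain ⟨t, h1, h2⟩ := exists_extend_tab (hb γ) (hbμ γ) t'
    refine ⟨polytab t, ⟨Submodule.subset_span ⟨t, rfl⟩, ?_⟩, slice_polytab h1 h2⟩
    simp only [SetLike.mem_coe, Submodule.mem_iInf, LinearMap.mem_ker]
    exact fun j => slice_polytab_zero (hb γ) (hbμ γ) h1 j.2
  choose S hS using fun γ => exists_section _ _ _ (hle γ)
  have hS0 : ∀ γ u j, (b γ).1 < j → slice n j (S γ u) = 0 := by
    intro γ u j hj
    have := (hS γ u).1.2
    simp only [SetLike.mem_coe, Submodule.mem_iInf, LinearMap.mem_ker] at this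
    exact this ⟨j, hj⟩
  let T : (∀ γ : {γ // γ ∈ (YD n).filter (· ≤ μ)}, wordSpecht n γ.1) →ₗ[ℂ]
      ((Fin (n + 1) → ℕ) → ℂ) := ∑ γ, S γ ∘ₗ LinearMap.proj γ
  have hT : ∀ v, T v = ∑ γ, S γ (v γ) := fun v => by simp [T]
  have hmem : ∀ v, T v ∈ wordSpecht (n + 1) μ := fun v => by
    rw [hT]
    exact Submodule.sum_mem _ fun γ _ => (hS γ _).1.1
  have hrow : ∀ γ γ', (b γ).1 = (b γ').1 → γ = γ' := fun γ γ' h =>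
    Subtype.ext (removable_row_inj (hb γ) (hbμ γ) (hb γ') (hbμ γ') h)
  have hinj : Function.Injective (T.codRestrict _ hmem) := by
    rw [← LinearMap.ker_eq_bot, LinearMap.ker_eq_bot']
    intro v hv
    have hv0 : T v = 0 := congrArg Subtype.val hv
    rw [hT] at hv0
    by_contra hne
    have hne' : ∃ γ, v γ ≠ 0 := by
      by_contra h
      push Not at h
      exact hne (funext h)
    obtain ⟨γ₀, hγ₀⟩ := hne'
    obtain ⟨γ, hγ, hmax⟩ := Finset.exists_max_image (Finset.univ.filter fun γ => v γ ≠ 0)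
      (fun γ => (b γ).1) ⟨γ₀, by simp [hγ₀]⟩
    simp only [Finset.mem_filter, Finset.mem_univ, true_and] at hγ hmax
    apply hγ
    have h0 : slice n (b γ).1 (∑ γ, S γ (v γ)) = 0 := by rw [hv0, map_zero]
    rw [map_sum, Finset.sum_eq_single γ] at h0
    · rw [(hS γ _).2] at h0
      exact Subtype.ext h0
    · intro γ' _ hγ'
      by_cases h : v γ' = 0
      · rw [h, map_zero, map_zero]
      · refine hS0 γ' _ _ (lt_of_le_of_ne (hmax γ' h) fun e => hγ' (hrow _ _ e))
    · simp
  have := LinearMap.finrank_le_finrank_of_injective hinj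
  rwa [Module.finrank_pi_fintype] at this

/-- The recursion defining `numSYT` is dominated by the branching bound. -/
lemma numSYT_le_wordSpecht (n : ℕ) (μ : YoungDiagram) (hμ : μ.card = n) :
    numSYT n μ ≤ Module.finrank ℂ (wordSpecht n μ) := by
  induction n generalizing μ with
  | zero =>
    rw [numSYT, Submodule.one_le_finrank_iff, Ne, Submodule.eq_bot_iff]
    intro h
    have h1 := congrFun (h _ (Submodule.subset_span ⟨canTab hμ, rfl⟩)) (fun _ => 0)
    simp [polytab] at h1
  | succ n ih =>
    rw [numSYT]
    refine le_trans (Finset.sum_le_sum fun γ hγ => ih γ ?_) (wordSpecht_branching hμ)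
    exact mem_YD.1 (Finset.mem_filter.1 hγ).1

open MonoidAlgebra

/-- The map sending `g` to the indicator of the word `row ∘ g⁻¹`. -/
def toWord (n : ℕ) (μ : YoungDiagram) : MonoidAlgebra ℂ (Perm (Fin n)) →ₗ[ℂ] ((Fin n → ℕ) → ℂ) where
  toFun a w := ∑ g, if (∀ x, rowIndex μ (g⁻¹ x) = w x) then a.coeff g else 0
  map_add' a b := by
    funext w
    rw [Pi.add_apply, ← Finset.sum_add_distrib]
    refine Finset.sum_congr rfl fun g _ => ?_
    split_ifs <;> simp
  map_smul' r a := by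
    funext w
    rw [Pi.smul_apply, RingHom.id_apply, smul_eq_mul, Finset.mul_sum]
    refine Finset.sum_congr rfl fun g _ => ?_
    split_ifs <;> simp

lemma toWord_single (g : Perm (Fin n)) (r : ℂ) (w : Fin n → ℕ) :
    toWord n μ (single g r) w = if (∀ x, rowIndex μ (g⁻¹ x) = w x) then r else 0 := by
  show ∑ g', _ = _
  rw [Finset.sum_eq_single g]
  · simp
  · intro g' _ hg'
    rw [coeff_single, Finsupp.single_apply, if_neg hg'.symm, ite_self]
  · simp

lemma toWord_mul_rowSym :
    ∃ r : ℂ, r ≠ 0 ∧ ∀ a, toWord n μ (a * rowSym n μ) = r • toWord n μ a := by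
  refine ⟨((Finset.univ.filter fun σ => σ ∈ rowStabilizer n μ).card : ℂ), ?_, ?_⟩
  · have : (1 : Perm (Fin n)) ∈ Finset.univ.filter fun σ => σ ∈ rowStabilizer n μ := by
      simp [one_mem]
    exact_mod_cast (Finset.card_pos.2 ⟨_, this⟩).ne'
  · intro a
    induction a using MonoidAlgebra.induction_linear with
    | zero => simp
    | add f g hf hg => rw [add_mul, map_add, hf, hg, map_add, smul_add]
    | single g s =>
      rw [rowSym, symz, Finset.mul_sum, map_sum, Finset.card_eq_sum_ones, Nat.cast_sum,
        Finset.sum_smul, Finset.sum_filter]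
      refine Finset.sum_congr rfl fun σ _ => ?_
      split_ifs with h
      · funext w
        rw [mul_smul_comm, single_mul_single, map_smul]
        simp only [MonoidHom.one_apply, Units.val_one, Int.cast_one, one_smul, Nat.cast_one, mul_one]
        rw [toWord_single, toWord_single]
        have := (rowStabilizer n μ).inv_mem h
        have h' : ∀ x, rowIndex μ (σ⁻¹ x) = rowIndex μ x := this
        simp only [mul_inv_rev, Perm.mul_apply, h']
      · simp

/-- Every polytabloid is the image of an element of the Specht ideal. -/
lemma polytab_mem (hμ : μ.card = n) (t : Fin n ≃ {c // c ∈ μ.cells}) :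
    ∃ a ∈ spechtSub n μ, toWord n μ a = polytab t := by
  obtain ⟨r, hr, h⟩ := toWord_mul_rowSym (n := n) (μ := μ)
  let g : Perm (Fin n) := (canTab hμ).trans t.symm
  have hg : ∀ x, t x = canTab hμ (g⁻¹ x) := fun x => by
    have : g⁻¹ x = (canTab hμ).symm (t x) := rfl
    rw [this]; simp
  refine ⟨(r⁻¹ • single g 1) * youngSymmetrizer n μ, mem_spechtSub.2 ⟨_, rfl⟩, ?_⟩
  rw [youngSymmetrizer_eq, ← mul_assoc, h, smul_mul_assoc, map_smul, smul_smul, mul_inv_cancel₀ hr,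
    one_smul]
  funext w
  rw [colAnti, symz, Finset.mul_sum, map_sum, Finset.sum_apply, polytab]
  let φ : Perm (Fin n) ≃ Perm (Fin n) :=
    (Equiv.inv _).trans (MulAut.conj g).toEquiv
  conv_rhs => rw [← Equiv.sum_comp φ]
  have hφ : ∀ σ, φ σ = g * σ⁻¹ * g⁻¹ := fun σ => rfl
  refine Finset.sum_congr rfl fun σ _ => ?_
  have hc : (∀ x, (t (φ σ x)).1.2 = (t x).1.2) ↔ σ ∈ colStabilizer n μ := by
    rw [← inv_mem_iff]
    show _ ↔ ∀ m, _
    rw [← Equiv.forall_congr_right (g⁻¹ : Perm (Fin n)) (q := fun m => colIndex μ (σ⁻¹ m) = colIndex μ m)]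
    refine forall_congr' fun x => ?_
    rw [hg, hg, hφ, canTab_col, canTab_col]
    simp
  have hs : Perm.sign (φ σ) = Perm.sign σ := by
    rw [hφ, map_mul, map_mul, mul_comm, ← mul_assoc, ← map_mul, inv_mul_cancel, map_one, one_mul,
        Perm.sign_inv]
  rw [if_congr (and_congr_left' hc) (congrArg (fun u : ℤˣ => ((u : ℤ) : ℂ)) hs) rfl]
  split_ifs with h1 h2 h2
  · rw [mul_smul_comm, single_mul_single, map_smul, Pi.smul_apply, toWord_single, if_pos]
    · simp
    · intro x
      rw [← h2.2 x, hg, canTab_row, hφ]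
      simp
  · rw [mul_smul_comm, single_mul_single, map_smul, Pi.smul_apply, toWord_single, if_neg]
    · simp
    · intro h3
      refine h2 ⟨h1, fun x => ?_⟩
      rw [← h3 x, hg, canTab_row, hφ]
      simp
  · exact absurd h2.1 h1
  · simp

/-- The number of standard tableaux bounds the dimension of the Specht module from below. -/
lemma numSYT_le_finrank (hμ : μ.card = n) : numSYT n μ ≤ Module.finrank ℂ (spechtSub n μ) := by
  refine (numSYT_le_wordSpecht n μ hμ).trans ?_
  have : wordSpecht n μ ≤ (spechtSub n μ).map (toWord n μ) := by
    rw [wordSpecht, Submodule.span_le]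
    rintro _ ⟨t, rfl⟩
    exact polytab_mem hμ t
  exact (Submodule.finrank_mono this).trans (Submodule.finrank_map_le _ _)

end Words

/-! ### Multiplicities as ranks of Young symmetrizers -/

section Multiplicity

open MonoidAlgebra TensorProduct

variable {k n : ℕ} {M : Type} [AddCommGroup M] [Module ℂ M]
  (ρ : Representation ℂ (Perm (Fin k) × Perm (Fin n)) M)

/-- The action of the group algebra of the first factor. -/
def actL : MonoidAlgebra ℂ (Perm (Fin k)) →ₐ[ℂ] Module.End ℂ M :=
  Representation.asAlgebraHom (ρ.comp (MonoidHom.inl _ _))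

/-- The action of the group algebra of the second factor. -/
def actR : MonoidAlgebra ℂ (Perm (Fin n)) →ₐ[ℂ] Module.End ℂ M :=
  Representation.asAlgebraHom (ρ.comp (MonoidHom.inr _ _))

lemma actL_single (g : Perm (Fin k)) (r : ℂ) : actL ρ (single g r) = r • ρ (g, 1) := by
  rw [actL, Representation.asAlgebraHom_single]; rfl

lemma actR_single (g : Perm (Fin n)) (r : ℂ) : actR ρ (single g r) = r • ρ (1, g) := by
  rw [actR, Representation.asAlgebraHom_single]; rfl

lemma actL_actR_comm (a : MonoidAlgebra ℂ (Perm (Fin k))) (b : MonoidAlgebra ℂ (Perm (Fin n))) :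
    actL ρ a * actR ρ b = actR ρ b * actL ρ a := by
  induction a using MonoidAlgebra.induction_linear with
  | zero => simp
  | add f g hf hg => rw [map_add, add_mul, mul_add, hf, hg]
  | single g r =>
    induction b using MonoidAlgebra.induction_linear with
    | zero => simp
    | add f g hf hg => rw [map_add, add_mul, mul_add, hf, hg]
    | single h s =>
      rw [actL_single, actR_single, smul_mul_smul_comm, smul_mul_smul_comm, ← map_mul, ← map_mul,
        mul_comm r s]
      simp

lemma actL_actR_apply (a : MonoidAlgebra ℂ (Perm (Fin k))) (b : MonoidAlgebra ℂ (Perm (Fin n)))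
    (x : M) : actL ρ a (actR ρ b x) = actR ρ b (actL ρ a x) :=
  LinearMap.congr_fun (actL_actR_comm ρ a b) x

/-- The underlying space of the Specht representation. -/
def spechtEquiv (n : ℕ) (l : YoungDiagram) : spechtSub n l ≃ₗ[ℂ] (SpechtRep n l) where
  toFun u := (RestrictScalars.addEquiv ℂ (MonoidAlgebra ℂ (Perm (Fin n))) (SpechtIdeal n l)).symm u
  invFun u := RestrictScalars.addEquiv ℂ (MonoidAlgebra ℂ (Perm (Fin n))) (SpechtIdeal n l) u
  left_inv _ := rfl
  right_inv _ := rfl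
  map_add' _ _ := rfl
  map_smul' r u := by
    refine (RestrictScalars.addEquiv ℂ (MonoidAlgebra ℂ (Perm (Fin n))) (SpechtIdeal n l)).injective ?_
    refine Eq.trans ?_ (RestrictScalars.addEquiv_map_smul ℂ (MonoidAlgebra ℂ (Perm (Fin n))) _ r _).symm
    apply Subtype.ext
    exact (algebraMap_smul (MonoidAlgebra ℂ (Perm (Fin n))) r u.1).symm

/-- Left multiplication on the Specht ideal, linear in the multiplier. -/
def spechtMul {n : ℕ} {l : YoungDiagram} (u : spechtSub n l) :
    MonoidAlgebra ℂ (Perm (Fin n)) →ₗ[ℂ] spechtSub n l :=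
  (LinearMap.mulRight ℂ u.1).codRestrict (spechtSub n l)
    (fun a => (SpechtIdeal n l).smul_mem a u.2)

lemma spechtMul_coe {l : YoungDiagram} (u : spechtSub n l) (a : MonoidAlgebra ℂ (Perm (Fin n))) :
    (spechtMul u a).1 = a * u.1 := rfl

lemma spechtRep_apply (l : YoungDiagram) (g : Perm (Fin n)) (u : spechtSub n l) :
    (SpechtRep n l).ρ g (spechtEquiv n l u) = spechtEquiv n l (spechtMul u (single g 1)) := by
  have := Representation.ofModule_asAlgebraHom_apply_apply (k := ℂ) (G := Perm (Fin n))
    (SpechtIdeal n l) (single g 1) (spechtEquiv n l u)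
  rw [Representation.asAlgebraHom_single_one] at this
  exact this

/-- The Young symmetrizer as an element of the Specht ideal. -/
def youngGen (n : ℕ) (l : YoungDiagram) : spechtSub n l :=
  ⟨youngSymmetrizer n l, Submodule.mem_span_singleton_self _⟩

variable {β α : YoungDiagram}

/-- The bilinear map on Specht ideals underlying a homomorphism from an outer tensor product. -/
def homBilin (F : outerTensor (SpechtRep k β) (SpechtRep n α) ⟶ Rep.of ρ) :
    spechtSub k β →ₗ[ℂ] spechtSub n α →ₗ[ℂ] M :=
  ((TensorProduct.mk ℂ (SpechtRep k β) (SpechtRep n α)).compl₁₂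
    (spechtEquiv k β).toLinearMap (spechtEquiv n α).toLinearMap).compr₂ F.hom.toLinearMap

lemma homBilin_apply (F : outerTensor (SpechtRep k β) (SpechtRep n α) ⟶ Rep.of ρ)
    (u : spechtSub k β) (v : spechtSub n α) :
    homBilin ρ F u v = F.hom.toLinearMap (spechtEquiv k β u ⊗ₜ[ℂ] spechtEquiv n α v) := rfl

lemma homBilin_single (F : outerTensor (SpechtRep k β) (SpechtRep n α) ⟶ Rep.of ρ)
    (g : Perm (Fin k)) (h : Perm (Fin n)) (u : spechtSub k β) (v : spechtSub n α) :
    homBilin ρ F (spechtMul u (single g 1)) (spechtMul v (single h 1)) =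
      ρ (g, h) (homBilin ρ F u v) := by
  rw [homBilin_apply, homBilin_apply, ← spechtRep_apply, ← spechtRep_apply]
  exact LinearMap.congr_fun (F.hom.isIntertwining' (g, h))
    (spechtEquiv k β u ⊗ₜ[ℂ] spechtEquiv n α v)

/-- An intertwining map is linear over the two group algebras. -/
lemma homBilin_mul (F : outerTensor (SpechtRep k β) (SpechtRep n α) ⟶ Rep.of ρ)
    (a : MonoidAlgebra ℂ (Perm (Fin k))) (b : MonoidAlgebra ℂ (Perm (Fin n)))
    (u : spechtSub k β) (v : spechtSub n α) :
    homBilin ρ F (spechtMul u a) (spechtMul v b) = actL ρ a (actR ρ b (homBilin ρ F u v)) := by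
  induction a using MonoidAlgebra.induction_linear with
  | zero => simp
  | add f g hf hg => simp only [map_add, LinearMap.add_apply, hf, hg]
  | single g r =>
    induction b using MonoidAlgebra.induction_linear with
    | zero => simp
    | add f g hf hg => simp only [map_add, LinearMap.add_apply, hf, hg]
    | single h s =>
      have h1 : (single g r : MonoidAlgebra ℂ (Perm (Fin k))) = r • single g 1 := by simp
      have h2 : (single h s : MonoidAlgebra ℂ (Perm (Fin n))) = s • single h 1 := by simp
      rw [actL_single, actR_single, h1, h2, map_smul, map_smul, map_smul, map_smul,
        LinearMap.smul_apply, homBilin_single, LinearMap.smul_apply, LinearMap.smul_apply, map_smul,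
        ← Module.End.mul_apply (ρ _) (ρ _), ← map_mul]
      simp only [Prod.mk_mul_mk, mul_one, one_mul]
      exact smul_comm _ _ _

/-- The two Young symmetrizers generate the outer tensor product, so a homomorphism vanishing there is
zero. -/
lemma homBilin_injective (F : outerTensor (SpechtRep k β) (SpechtRep n α) ⟶ Rep.of ρ)
    (h : homBilin ρ F (youngGen k β) (youngGen n α) = 0) : F = 0 := by
  have h0 : ∀ u v, homBilin ρ F u v = 0 := by
    intro u v
    obtain ⟨a, ha⟩ := mem_spechtSub.1 u.2
    obtain ⟨b, hb⟩ := mem_spechtSub.1 v.2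
    have hu : u = spechtMul (youngGen k β) a := Subtype.ext ha
    have hv : v = spechtMul (youngGen n α) b := Subtype.ext hb
    rw [hu, hv, homBilin_mul, h, map_zero, map_zero]
  apply Rep.hom_ext
  apply Representation.IntertwiningMap.ext
  refine TensorProduct.ext (R := ℂ) (LinearMap.ext₂ fun x y => ?_)
  have := h0 ((spechtEquiv k β).symm x) ((spechtEquiv n α).symm y)
  rw [homBilin_apply, LinearEquiv.apply_symm_apply, LinearEquiv.apply_symm_apply] at this
  exact this

/-- Evaluation of homomorphisms at the pair of Young symmetrizers. -/
def evalYoung (β α : YoungDiagram) :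
    (outerTensor (SpechtRep k β) (SpechtRep n α) ⟶ Rep.of ρ) →ₗ[ℂ] M where
  toFun F := homBilin ρ F (youngGen k β) (youngGen n α)
  map_add' _ _ := rfl
  map_smul' _ _ := rfl

/-- The linear map `u ⊗ v ↦ u v m` attached to a vector `m`. -/
def vecLift (β α : YoungDiagram) (m : M) :
    TensorProduct ℂ (SpechtRep k β) (SpechtRep n α) →ₗ[ℂ] M :=
  TensorProduct.lift (((LinearMap.mul ℂ (Module.End ℂ M)).compl₁₂
    ((actL ρ).toLinearMap ∘ₗ (spechtSub k β).subtype ∘ₗ (spechtEquiv k β).symm.toLinearMap)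
    ((actR ρ).toLinearMap ∘ₗ (spechtSub n α).subtype ∘ₗ
      (spechtEquiv n α).symm.toLinearMap)).compr₂ (LinearMap.applyₗ m))

lemma vecLift_tmul (m : M) (u : spechtSub k β) (v : spechtSub n α) :
    vecLift ρ β α m (spechtEquiv k β u ⊗ₜ[ℂ] spechtEquiv n α v) =
      actL ρ u.1 (actR ρ v.1 m) := by
  simp [vecLift]

/-- Every vector defines an intertwining map `u ⊗ v ↦ u v m`. -/
def homOfVec (β α : YoungDiagram) (m : M) :
    outerTensor (SpechtRep k β) (SpechtRep n α) ⟶ Rep.of ρ :=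
  Rep.ofHom
    { vecLift ρ β α m with
      isIntertwining' := by
        rintro ⟨g, h⟩
        refine TensorProduct.ext (R := ℂ) (LinearMap.ext₂ fun x y => ?_)
        obtain ⟨u, rfl⟩ := (spechtEquiv k β).surjective x
        obtain ⟨v, rfl⟩ := (spechtEquiv n α).surjective y
        change vecLift ρ β α m ((SpechtRep k β).ρ g (spechtEquiv k β u) ⊗ₜ[ℂ]
          (SpechtRep n α).ρ h (spechtEquiv n α v)) =
          ρ (g, h) (vecLift ρ β α m (spechtEquiv k β u ⊗ₜ[ℂ] spechtEquiv n α v))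
        rw [spechtRep_apply, spechtRep_apply, vecLift_tmul, vecLift_tmul, spechtMul_coe,
          spechtMul_coe, map_mul, map_mul, Module.End.mul_apply, Module.End.mul_apply,
          actL_actR_apply ρ u.1, actL_single, actR_single, one_smul, one_smul,
          ← Module.End.mul_apply (ρ _) (ρ _), ← map_mul, actL_actR_apply]
        simp }

lemma evalYoung_homOfVec (m : M) : evalYoung ρ β α (homOfVec ρ β α m) =
    actL ρ (youngSymmetrizer k β) (actR ρ (youngSymmetrizer n α) m) :=
  vecLift_tmul ρ m (youngGen k β) (youngGen n α)

/-- The multiplicity is the rank of the product of the two Young symmetrizers. -/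
lemma multIn_eq [Module.Finite ℂ M] (hβ : β.card = k) (hα : α.card = n) :
    multIn (outerTensor (SpechtRep k β) (SpechtRep n α)) (Rep.of ρ) =
      Module.finrank ℂ (LinearMap.range
        (actL ρ (youngSymmetrizer k β) * actR ρ (youngSymmetrizer n α))) := by
  have hinj : Function.Injective (evalYoung ρ β α) := by
    rw [← LinearMap.ker_eq_bot, LinearMap.ker_eq_bot']
    exact fun F hF => homBilin_injective ρ F hF
  have hrange : LinearMap.range (evalYoung ρ β α) = LinearMap.range
      (actL ρ (youngSymmetrizer k β) * actR ρ (youngSymmetrizer n α)) := by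
    apply le_antisymm
    · rintro _ ⟨F, rfl⟩
      obtain ⟨b, hb⟩ := exists_young_regular hβ
      obtain ⟨b', hb'⟩ := exists_young_regular hα
      have e1 : spechtMul (youngGen k β) (youngSymmetrizer k β * b) = youngGen k β :=
        Subtype.ext hb
      have e2 : spechtMul (youngGen n α) (youngSymmetrizer n α * b') = youngGen n α :=
        Subtype.ext hb'
      have e3 := homBilin_mul ρ F (youngSymmetrizer k β * b) (youngSymmetrizer n α * b')
        (youngGen k β) (youngGen n α)
      rw [e1, e2, map_mul, map_mul, Module.End.mul_apply, Module.End.mul_apply,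
        actL_actR_apply ρ b] at e3
      exact ⟨_, e3.symm⟩
    · rintro _ ⟨m, rfl⟩
      exact ⟨homOfVec ρ β α m, evalYoung_homOfVec ρ m⟩
  rw [← hrange, LinearMap.finrank_range_of_inj hinj, multIn]

/-- The isotypic bound for the product of two symmetric groups: `sum_finrank_le` is applied first to
the second factor, and then to the first factor acting on each `c_α M`. -/
lemma sum_multIn_le [Module.Finite ℂ M] :
    ∑ β ∈ YD k, ∑ α ∈ YD n, multIn (outerTensor (SpechtRep k β) (SpechtRep n α)) (Rep.of ρ) *
      (Module.finrank ℂ (spechtSub k β) * Module.finrank ℂ (spechtSub n α)) ≤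
      Module.finrank ℂ M := by
  have h1 := sum_finrank_le (actR ρ) ⊤ (fun _ _ _ => Submodule.mem_top)
  rw [finrank_top] at h1
  refine le_trans ?_ h1
  rw [Finset.sum_comm]
  refine Finset.sum_le_sum fun α hα => ?_
  have h2 := sum_finrank_le (actL ρ) ((⊤ : Submodule ℂ M).map (actR ρ (youngSymmetrizer n α)))
    (by
      rintro a _ ⟨m, -, rfl⟩
      exact ⟨actL ρ a m, trivial, (actL_actR_apply ρ _ _ _).symm⟩)
  refine le_trans (le_of_eq ?_) (Nat.mul_le_mul_left _ h2)
  rw [Finset.mul_sum]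
  refine Finset.sum_congr rfl fun β hβ => ?_
  rw [multIn_eq ρ (mem_YD.1 hβ) (mem_YD.1 hα), Submodule.map_top, ← LinearMap.range_comp]
  rw [← Module.End.mul_eq_comp]
  ring

end Multiplicity

/-! ### The size of `O₁` -/

section Orbit

instance (k : ℕ) : Finite (O1Type k) := by
  unfold O1Type SurjFun
  infer_instance

lemma fibres_of_kernelSizes {k r : ℕ} (f : Fin r → Fin k)
    (h : kernelSizes f = 3 ::ₘ Multiset.replicate (k - 1) 1) :
    ∃ y, (Finset.univ.filter fun x => f x = y).card = 3 ∧
      ∀ z, z ≠ y → (Finset.univ.filter fun x => f x = z).card = 1 := by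
  unfold kernelSizes at h
  have h3 : 3 ∈ 3 ::ₘ Multiset.replicate (k - 1) 1 := Multiset.mem_cons_self _ _
  rw [← h, Multiset.mem_map] at h3
  obtain ⟨y, -, hy⟩ := h3
  refine ⟨y, hy, fun z hz => ?_⟩
  rw [← Finset.insert_erase (Finset.mem_univ y), Finset.insert_val_of_notMem (by simp),
    Multiset.map_cons, hy, Multiset.cons_inj_right] at h
  refine Multiset.eq_of_mem_replicate (n := k - 1) ?_
  rw [← h]
  exact Multiset.mem_map_of_mem _ (Finset.mem_erase.2 ⟨hz, Finset.mem_univ z⟩)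

/-- A surjection in `O₁` has one fibre of size three, and its other fibres are singletons. -/
lemma O1_fibres {k : ℕ} (f : O1Type k) : ∃ y, (Finset.univ.filter fun x => f.1.1 x = y).card = 3 ∧
    ∀ z, z ≠ y → (Finset.univ.filter fun x => f.1.1 x = z).card = 1 :=
  fibres_of_kernelSizes f.1.1 f.2

lemma kernelSizes_of_fibres {k r : ℕ} (f : Fin r → Fin k) (y : Fin k)
    (hy : (Finset.univ.filter fun x => f x = y).card = 3)
    (h1 : ∀ z, z ≠ y → (Finset.univ.filter fun x => f x = z).card = 1) :
    kernelSizes f = 3 ::ₘ Multiset.replicate (k - 1) 1 := by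
  unfold kernelSizes
  rw [← Finset.insert_erase (Finset.mem_univ y), Finset.insert_val_of_notMem (by simp),
    Multiset.map_cons, hy, Multiset.cons_inj_right, Multiset.eq_replicate]
  refine ⟨?_, ?_⟩
  · rw [Multiset.card_map, ← Finset.card_def, Finset.card_erase_of_mem (Finset.mem_univ y)]
    simp
  · intro n hn
    obtain ⟨z, hz, rfl⟩ := Multiset.mem_map.1 hn
    exact h1 z (Finset.mem_erase.1 (Finset.mem_def.2 hz)).1

/-- An element of `O₁` is determined by the value with a fibre of size three, that fibre, and the
bijection between the complements. -/
lemma card_O1_le (m : ℕ) :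
    Nat.card (O1Type (m + 1)) ≤ (m + 1) * (m + 3).choose 3 * m.factorial := by
  let S := Σ p : Fin (m + 1) × {T : Finset (Fin (m + 3)) // T.card = 3},
    ({x // x ∉ p.2.1} ≃ {z // z ≠ p.1})
  let g : S → Fin (m + 3) → Fin (m + 1) := fun s x =>
    if h : x ∈ s.1.2.1 then s.1.1 else (s.2 ⟨x, h⟩).1
  have hg : ∀ f : O1Type (m + 1), ∃ s, g s = f.1.1 := by
    intro f
    obtain ⟨y, hy, h1⟩ := O1_fibres f
    let e : {x // x ∉ Finset.univ.filter fun x => f.1.1 x = y} → {z // z ≠ y} :=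
      fun x => ⟨f.1.1 x.1, by have := x.2; simpa using this⟩
    have he : Function.Bijective e := by
      constructor
      · intro x x' hxx
        have hz := congrArg Subtype.val hxx
        apply Subtype.ext
        refine Finset.card_le_one.1 (h1 _ (e x').2).le x.1 ?_ x'.1 ?_
        · exact Finset.mem_filter.2 ⟨Finset.mem_univ _, hz⟩
        · exact Finset.mem_filter.2 ⟨Finset.mem_univ _, rfl⟩
      · rintro ⟨z, hz⟩
        obtain ⟨x, hx⟩ := f.1.2 z
        exact ⟨⟨x, by simpa [hx] using hz⟩, Subtype.ext hx⟩
    refine ⟨⟨(y, ⟨_, hy⟩), Equiv.ofBijective e he⟩, funext fun x => ?_⟩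
    by_cases hx : f.1.1 x = y
    · simp [g, hx]
    · simp [g, hx, e]
  choose s hs using hg
  have hinj : Function.Injective s := fun f f' h =>
    Subtype.ext (Subtype.ext (by rw [← hs f, ← hs f', h]))
  refine (Nat.card_le_card_of_injective s hinj).trans ?_
  rw [Nat.card_eq_fintype_card, Fintype.card_sigma]
  have hfib : ∀ p : Fin (m + 1) × {T : Finset (Fin (m + 3)) // T.card = 3},
      Fintype.card ({x // x ∉ p.2.1} ≃ {z // z ≠ p.1}) = m.factorial := by
    rintro ⟨y, T, hT⟩
    have c1 : Fintype.card {x // x ∉ T} = m := by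
      rw [Fintype.card_subtype_compl, Fintype.card_fin, Fintype.card_coe, hT]; omega
    have c2 : Fintype.card {z : Fin (m + 1) // z ≠ y} = m := by
      rw [Fintype.card_subtype_compl, Fintype.card_fin, Fintype.card_subtype_eq]; omega
    rw [Fintype.card_equiv (Fintype.equivOfCardEq (c1.trans c2.symm)), c1]
  simp only [hfib, Finset.sum_const, smul_eq_mul, Finset.card_univ, Fintype.card_prod,
    Fintype.card_fin]
  rw [Fintype.card_finset_len, Fintype.card_fin]

end Orbit

/-! ### The surjection attached to an intermediate diagram -/

section FGamma

variable {k n : ℕ} {α β γ : YoungDiagram} {b : ℕ × ℕ}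

/-- The surjection sending an entry of `α` to the entry of `β` in the same box, where the boxes of
`α` outside `γ` are all sent to the box `b` of `β`. -/
def gammaFun (hα : α.card = n) (hβ : β.card = k) (hμ : β.cells = insert b γ.cells) (x : Fin n) :
    Fin k :=
  (canTab hβ).symm (if h : (canTab hα x).1 ∈ γ.cells then
    ⟨_, hμ ▸ Finset.mem_insert_of_mem h⟩ else ⟨b, hμ ▸ Finset.mem_insert_self _ _⟩)

variable (hα : α.card = n) (hβ : β.card = k) (hb : b ∉ γ.cells)
  (hμ : β.cells = insert b γ.cells)

lemma gammaFun_of_mem {x : Fin n} (h : (canTab hα x).1 ∈ γ.cells) :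
    (canTab hβ (gammaFun hα hβ hμ x)).1 = (canTab hα x).1 := by
  simp [gammaFun, h]

lemma gammaFun_of_notMem {x : Fin n} (h : (canTab hα x).1 ∉ γ.cells) :
    (canTab hβ (gammaFun hα hβ hμ x)).1 = b := by
  simp [gammaFun, h]

include hb in
lemma gammaFun_eq_iff (x x' : Fin n) : gammaFun hα hβ hμ x = gammaFun hα hβ hμ x' ↔
    x = x' ∨ ((canTab hα x).1 ∉ γ.cells ∧ (canTab hα x').1 ∉ γ.cells) := by
  rw [← (canTab hβ).injective.eq_iff, Subtype.ext_iff]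
  rw [← (canTab hα).injective.eq_iff, Subtype.ext_iff]
  by_cases h : (canTab hα x).1 ∈ γ.cells <;> by_cases h' : (canTab hα x').1 ∈ γ.cells
  · rw [gammaFun_of_mem hα hβ hμ h, gammaFun_of_mem hα hβ hμ h']; simp [h]
  · rw [gammaFun_of_mem hα hβ hμ h, gammaFun_of_notMem hα hβ hμ h']
    have h1 : (canTab hα x).1 ≠ b := fun e => hb (e ▸ h)
    have h2 : (canTab hα x).1 ≠ (canTab hα x').1 := fun e => h' (e ▸ h)
    simp [h1, h2, h]
  · rw [gammaFun_of_notMem hα hβ hμ h, gammaFun_of_mem hα hβ hμ h']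
    have h1 : b ≠ (canTab hα x').1 := fun e => hb (e ▸ h')
    have h2 : (canTab hα x).1 ≠ (canTab hα x').1 := fun e => h (e ▸ h')
    simp [h1, h2, h']
  · rw [gammaFun_of_notMem hα hβ hμ h, gammaFun_of_notMem hα hβ hμ h']; simp [h, h']

/-- The entry of `β` in the box `b`. -/
def gammaPt (hβ : β.card = k) (hμ : β.cells = insert b γ.cells) : Fin k :=
  (canTab hβ).symm ⟨b, hμ ▸ Finset.mem_insert_self _ _⟩

lemma canTab_gammaPt : (canTab hβ (gammaPt hβ hμ)).1 = b := by simp [gammaPt]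

include hb in
lemma gammaFun_eq_pt_iff (x : Fin n) :
    gammaFun hα hβ hμ x = gammaPt hβ hμ ↔ (canTab hα x).1 ∉ γ.cells := by
  rw [← (canTab hβ).injective.eq_iff, Subtype.ext_iff, canTab_gammaPt]
  by_cases h : (canTab hα x).1 ∈ γ.cells
  · rw [gammaFun_of_mem hα hβ hμ h]
    simp only [h, not_true, iff_false]
    exact fun e => hb (e ▸ h)
  · rw [gammaFun_of_notMem hα hβ hμ h]; simp [h]

lemma gammaPt_mem {z : Fin k} (hz : z ≠ gammaPt hβ hμ) : (canTab hβ z).1 ∈ γ.cells := by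
  refine (Finset.mem_insert.1 (hμ.subset (canTab hβ z).2)).resolve_left fun h => hz ?_
  rw [← (canTab hβ).injective.eq_iff, Subtype.ext_iff, canTab_gammaPt, h]

lemma gammaFun_surj_of_ne (hγ : γ.cells ⊆ α.cells) {z : Fin k} (hz : z ≠ gammaPt hβ hμ) :
    ∃ x, (canTab hα x).1 ∈ γ.cells ∧ gammaFun hα hβ hμ x = z := by
  have h := gammaPt_mem hβ hμ hz
  have h1 : (canTab hα ((canTab hα).symm ⟨_, hγ h⟩)).1 = (canTab hβ z).1 := by simp
  have h2 : (canTab hα ((canTab hα).symm ⟨_, hγ h⟩)).1 ∈ γ.cells := by rw [h1]; exact h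
  refine ⟨(canTab hα).symm ⟨_, hγ h⟩, h2, ?_⟩
  rw [← (canTab hβ).injective.eq_iff, Subtype.ext_iff, gammaFun_of_mem hα hβ hμ h2, h1]

lemma card_outside (hγ : γ.cells ⊆ α.cells) (hc : α.card = γ.card + 3) :
    (Finset.univ.filter fun x => (canTab hα x).1 ∉ γ.cells).card = 3 := by
  have h1 : (Finset.univ.filter fun x => (canTab hα x).1 ∉ γ.cells).card =
      (α.cells \ γ.cells).card := by
    refine Finset.card_bij (fun x _ => (canTab hα x).1) ?_ ?_ ?_
    · intro x hx
      exact Finset.mem_sdiff.2 ⟨(canTab hα x).2, (Finset.mem_filter.1 hx).2⟩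
    · intro x _ x' _ h
      exact (canTab hα).injective (Subtype.ext h)
    · intro c hc
      rw [Finset.mem_sdiff] at hc
      exact ⟨(canTab hα).symm ⟨c, hc.1⟩, by simpa using hc.2, by simp⟩
  rw [h1, Finset.card_sdiff_of_subset hγ]
  change α.card - γ.card = 3
  omega

include hb in
/-- The only fibre that is not a singleton lies over `b` and consists of the three boxes of
`α / γ`. -/
lemma gammaFun_kernelSizes (hγ : γ.cells ⊆ α.cells) (hc : α.card = γ.card + 3) :
    kernelSizes (gammaFun hα hβ hμ) = 3 ::ₘ Multiset.replicate (k - 1) 1 := by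
  refine kernelSizes_of_fibres _ (gammaPt hβ hμ) ?_ ?_
  · simp only [gammaFun_eq_pt_iff hα hβ hb hμ]
    exact card_outside hα hγ hc
  · intro z hz
    obtain ⟨x, hx, rfl⟩ := gammaFun_surj_of_ne hα hβ hμ hγ hz
    rw [Finset.card_eq_one]
    refine ⟨x, ?_⟩
    ext x'
    simp [gammaFun_eq_iff hα hβ hb hμ, hx]

lemma gammaFun_surjective (hγ : γ.cells ⊆ α.cells) (hc : α.card = γ.card + 3) :
    Function.Surjective (gammaFun hα hβ hμ) := by
  intro z
  by_cases hz : z = gammaPt hβ hμ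
  · have h1 : (Finset.univ.filter fun x => (canTab hα x).1 ∉ γ.cells).Nonempty := by
      rw [← Finset.card_pos, card_outside hα hγ hc]; omega
    obtain ⟨x, hx⟩ := h1
    refine ⟨x, ?_⟩
    rw [hz, ← (canTab hβ).injective.eq_iff, Subtype.ext_iff, canTab_gammaPt,
      gammaFun_of_notMem hα hβ hμ (Finset.mem_filter.1 hx).2]
  · obtain ⟨x, -, hx⟩ := gammaFun_surj_of_ne hα hβ hμ hγ hz
    exact ⟨x, hx⟩

/-- The condition on `f` that defines `rowVec`: a singleton fibre `{x}` has `x` in the row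
of `α` with the same index as the row of `f x` in `β`, and the big fibre lies over row `i`. -/
def RowCond (α β : YoungDiagram) (i : ℕ) (f : Fin n → Fin k) : Prop :=
  (∀ x, (∀ x', f x' = f x → x' = x) → rowIndex α x = rowIndex β (f x)) ∧
    ∀ x x', x ≠ x' → f x = f x' → rowIndex β (f x) = i

include hb in
/-- `RowCond` for a translate of `gammaFun`, read off from the entries of `α` in `γ` and from the entry
in the box `b`. -/
lemma rowCond_gammaFun (hγ : γ.cells ⊆ α.cells) (hc : α.card = γ.card + 3) (P : Perm (Fin k))
    (Q : Perm (Fin n)) (i : ℕ) (h : RowCond α β i fun x => P (gammaFun hα hβ hμ (Q⁻¹ x))) :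
    rowIndex β (P (gammaPt hβ hμ)) = i ∧ ∀ x, (canTab hα x).1 ∈ γ.cells →
      rowIndex α (Q x) = rowIndex β (P (gammaFun hα hβ hμ x)) := by
  have hQ : ∀ x, Q⁻¹ (Q x) = x := fun x => by simp
  constructor
  · have h1 : 1 < (Finset.univ.filter fun x => (canTab hα x).1 ∉ γ.cells).card := by
      rw [card_outside hα hγ hc]; omega
    obtain ⟨x, hx, x', hx', hne⟩ := Finset.one_lt_card.1 h1
    have hx := (Finset.mem_filter.1 hx).2
    have hx' := (Finset.mem_filter.1 hx').2
    have h2 := h.2 (Q x) (Q x') (Q.injective.ne hne)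
    simp only [hQ, EmbeddingLike.apply_eq_iff_eq] at h2
    rw [(gammaFun_eq_pt_iff hα hβ hb hμ x).2 hx, (gammaFun_eq_pt_iff hα hβ hb hμ x').2 hx'] at h2
    exact h2 rfl
  · intro x hx
    have h1 := h.1 (Q x)
    simp only [hQ, EmbeddingLike.apply_eq_iff_eq] at h1
    refine h1 fun x' hx' => ?_
    rw [gammaFun_eq_iff hα hβ hb hμ] at hx'
    have := hx'.resolve_right fun h => h.2 hx
    rw [← this]; simp

include hb in
lemma rowCond_gammaFun_self (hγ : γ.cells ⊆ α.cells) (hc : α.card = γ.card + 3) :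
    RowCond α β b.1 (gammaFun hα hβ hμ) := by
  constructor
  · intro x hx
    have hmem : (canTab hα x).1 ∈ γ.cells := by
      by_contra hx0
      have h1 : (Finset.univ.filter fun x => (canTab hα x).1 ∉ γ.cells) ⊆ {x} := by
        intro x' hx'
        rw [Finset.mem_singleton]
        exact hx x' ((gammaFun_eq_iff hα hβ hb hμ _ _).2
          (Or.inr ⟨(Finset.mem_filter.1 hx').2, hx0⟩))
      have h2 := Finset.card_le_card h1
      rw [card_outside hα hγ hc, Finset.card_singleton] at h2
      omega
    rw [← canTab_row hβ, gammaFun_of_mem hα hβ hμ hmem, canTab_row]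
  · intro x x' hne h
    rw [gammaFun_eq_iff hα hβ hb hμ] at h
    have := h.resolve_left hne
    rw [← canTab_row hβ, gammaFun_of_notMem hα hβ hμ this.1]

/-- The image of `x` under a column permutation is the entry of the column of `x` lying in the row
of that image. -/
lemma col_row_fix {m : ℕ} {μ : YoungDiagram} (h : μ.card = m) {Q : Perm (Fin m)}
    (hQ : Q ∈ colStabilizer m μ) {x y : Fin m} (hr : rowIndex μ (Q x) = rowIndex μ y)
    (hc : colIndex μ x = colIndex μ y) : Q x = y := by
  apply (canTab h).injective
  apply Subtype.ext
  apply Prod.ext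
  · rw [canTab_row, canTab_row, hr]
  · rw [canTab_col, canTab_col, hQ x, hc]

include hb in
/-- A column permutation cannot move the removable box `b` down. -/
lemma row_gammaPt_le {P : Perm (Fin k)} (hP : P ∈ colStabilizer k β) :
    rowIndex β (P (gammaPt hβ hμ)) ≤ b.1 := by
  rw [← canTab_row hβ]
  refine removable_bottom hb hμ (canTab hβ _).2 ?_
  rw [canTab_col, hP, ← canTab_col hβ, canTab_gammaPt]

include hb in
/-- The signs of the two column permutations agree. The boxes of `α / γ` are at the bottom of their
columns, so `Q` can only move their entries up; comparing sums of row indices, `Q` fixes them. On the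
remaining entries `gammaFun` intertwines `Q` and `P`. -/
lemma sign_eq_of_rowCond (hγ : IsHStrip γ α) {P : Perm (Fin k)} {Q : Perm (Fin n)}
    (hP : P ∈ colStabilizer k β) (hQ : Q ∈ colStabilizer n α)
    (h1 : rowIndex β (P (gammaPt hβ hμ)) = b.1)
    (h2 : ∀ x, (canTab hα x).1 ∈ γ.cells →
      rowIndex α (Q x) = rowIndex β (P (gammaFun hα hβ hμ x))) :
    Perm.sign Q = Perm.sign P := by
  set y := gammaPt hβ hμ with hy
  set f := gammaFun hα hβ hμ with hf
  have hPy : P y = y := by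
    refine col_row_fix hβ hP ?_ rfl
    rw [h1, ← canTab_row hβ, hy, canTab_gammaPt]
  -- boxes of `α` outside `γ` are at the bottom of their columns
  have hle : ∀ x, (canTab hα x).1 ∉ γ.cells → rowIndex α (Q x) ≤ rowIndex α x := by
    intro x hx
    by_contra hlt
    have hcol : (canTab hα (Q x)).1.2 = (canTab hα x).1.2 := hQ x
    rw [← canTab_row hα, ← canTab_row hα] at hlt
    have hQx : (canTab hα (Q x)).1 ∉ γ.cells := by
      intro hmem
      apply hx
      rw [YoungDiagram.mem_cells] at hmem ⊢
      exact γ.up_left_mem (i1 := (canTab hα x).1.1) (j1 := (canTab hα x).1.2)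
        (i2 := (canTab hα (Q x)).1.1) (j2 := (canTab hα (Q x)).1.2) (by omega) hcol.ge hmem
    refine hγ.2 _ (Finset.mem_sdiff.2 ⟨(canTab hα (Q x)).2, hQx⟩) _
      (Finset.mem_sdiff.2 ⟨(canTab hα x).2, hx⟩) (fun e => hlt ?_) hcol
    rw [e]
  have hbij : ∀ g : Fin k → ℕ, ∑ x ∈ Finset.univ.filter (fun x => (canTab hα x).1 ∈ γ.cells),
      g (f x) = ∑ z ∈ Finset.univ.erase y, g z := by
    intro g
    refine Finset.sum_bij (fun x _ => f x) ?_ ?_ ?_ ?_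
    · intro x hx
      refine Finset.mem_erase.2 ⟨fun e => ?_, Finset.mem_univ _⟩
      exact (gammaFun_eq_pt_iff hα hβ hb hμ x).1 e (Finset.mem_filter.1 hx).2
    · intro x hx x' _ e
      exact ((gammaFun_eq_iff hα hβ hb hμ x x').1 e).resolve_right
        fun h => h.1 (Finset.mem_filter.1 hx).2
    · intro z hz
      obtain ⟨x, hx, e⟩ := gammaFun_surj_of_ne hα hβ hμ hγ.1 (Finset.mem_erase.1 hz).1
      exact ⟨x, Finset.mem_filter.2 ⟨Finset.mem_univ _, hx⟩, e⟩
    · intro x _; rfl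
  have hin : ∑ x ∈ Finset.univ.filter (fun x => (canTab hα x).1 ∈ γ.cells), rowIndex α (Q x) =
      ∑ x ∈ Finset.univ.filter (fun x => (canTab hα x).1 ∈ γ.cells), rowIndex α x := by
    have e1 : ∑ z ∈ Finset.univ.erase y, rowIndex β (P z) =
        ∑ z ∈ Finset.univ.erase y, rowIndex β z := by
      have e2 := Equiv.sum_comp P fun z => rowIndex β z
      rw [← Finset.add_sum_erase _ _ (Finset.mem_univ y),
        ← Finset.add_sum_erase _ (fun z : Fin k => rowIndex β z) (Finset.mem_univ y), hPy] at e2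
      exact Nat.add_left_cancel e2
    rw [← hbij, ← hbij] at e1
    refine (Finset.sum_congr rfl fun x hx => ?_).trans (e1.trans
      (Finset.sum_congr rfl fun x hx => ?_))
    · exact h2 x (Finset.mem_filter.1 hx).2
    · rw [← canTab_row hβ, gammaFun_of_mem hα hβ hμ (Finset.mem_filter.1 hx).2, canTab_row]
  have hout : ∑ x ∈ Finset.univ.filter (fun x => (canTab hα x).1 ∉ γ.cells), rowIndex α (Q x) =
      ∑ x ∈ Finset.univ.filter (fun x => (canTab hα x).1 ∉ γ.cells), rowIndex α x := by
    have e2 := Equiv.sum_comp Q fun z => rowIndex α z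
    have e3 := Finset.sum_filter_add_sum_filter_not Finset.univ
      (fun x => (canTab hα x).1 ∈ γ.cells) fun x => rowIndex α (Q x)
    have e4 := Finset.sum_filter_add_sum_filter_not Finset.univ
      (fun x => (canTab hα x).1 ∈ γ.cells) fun x : Fin n => rowIndex α x
    omega
  have hfix : ∀ x, (canTab hα x).1 ∉ γ.cells → Q x = x := by
    intro x hx
    refine col_row_fix hα hQ ?_ rfl
    exact (Finset.sum_eq_sum_iff_of_le fun x hx => hle x (Finset.mem_filter.1 hx).2).1 hout x
      (Finset.mem_filter.2 ⟨Finset.mem_univ _, hx⟩)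
  have hmem : ∀ x, Q x ≠ x → (canTab hα x).1 ∈ γ.cells := fun x hx => by
    by_contra h
    exact hx (hfix x h)
  have hcomm : ∀ x, Q x ≠ x → f (Q x) = P (f x) := by
    intro x hx
    have m1 := hmem x hx
    have m2 := hmem (Q x) fun e => hx (Q.injective e)
    apply (canTab hβ).injective
    apply Subtype.ext
    rw [gammaFun_of_mem hα hβ hμ m2]
    apply Prod.ext
    · rw [canTab_row, canTab_row, h2 x m1]
    · rw [canTab_col, canTab_col, hQ x, hP (f x), ← canTab_col hβ, gammaFun_of_mem hα hβ hμ m1,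
        canTab_col]
  refine Perm.sign_bij (fun x _ => f x) (fun x hx _ => hcomm x hx) ?_ ?_
  · intro x x' hx _ e
    exact ((gammaFun_eq_iff hα hβ hb hμ x x').1 e).resolve_right fun h => h.1 (hmem x hx)
  · intro z hz
    obtain ⟨x, hx, e⟩ := gammaFun_surj_of_ne hα hβ hμ hγ.1 (z := z) (fun e => hz (by rw [e, hPy]))
    refine ⟨x, fun hx' => hz ?_, e⟩
    -- if `Q` fixes `x`, then `P` preserves the row and column of `f x`
    refine col_row_fix hβ hP ?_ rfl
    rw [← e, ← h2 x hx, hx', ← canTab_row hβ, gammaFun_of_mem hα hβ hμ hx, canTab_row]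

end FGamma

/-! ### Lower bound for the multiplicities -/

section Lower

open MonoidAlgebra

section Generic

variable {k n : ℕ} {M : Type} [AddCommGroup M] [Module ℂ M]
  (ρ : Representation ℂ (Perm (Fin k) × Perm (Fin n)) M)

lemma actL_symz (H : Subgroup (Perm (Fin k))) (χ : Perm (Fin k) →* ℤˣ) (v : M) :
    actL ρ (symz H χ) v = ∑ g, if g ∈ H then ((χ g : ℤ) : ℂ) • ρ (g, 1) v else 0 := by
  rw [symz, map_sum, LinearMap.sum_apply]
  refine Finset.sum_congr rfl fun g _ => ?_
  split_ifs
  · rw [map_smul, actL_single, one_smul, LinearMap.smul_apply]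
  · rw [map_zero, LinearMap.zero_apply]

lemma actR_symz (H : Subgroup (Perm (Fin n))) (χ : Perm (Fin n) →* ℤˣ) (v : M) :
    actR ρ (symz H χ) v = ∑ g, if g ∈ H then ((χ g : ℤ) : ℂ) • ρ (1, g) v else 0 := by
  rw [symz, map_sum, LinearMap.sum_apply]
  refine Finset.sum_congr rfl fun g _ => ?_
  split_ifs
  · rw [map_smul, actR_single, one_smul, LinearMap.smul_apply]
  · rw [map_zero, LinearMap.zero_apply]

lemma sum_ite_mem_smul {m : ℕ} (H : Subgroup (Perm (Fin m))) (v : M) :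
    (∑ g, if g ∈ H then v else 0) = ((Finset.univ.filter (· ∈ H)).card : ℂ) • v := by
  rw [← Finset.sum_filter, Finset.sum_const, Nat.cast_smul_eq_nsmul]

lemma card_filter_mem_ne_zero {m : ℕ} (H : Subgroup (Perm (Fin m))) :
    ((Finset.univ.filter (· ∈ H)).card : ℂ) ≠ 0 := by
  rw [Nat.cast_ne_zero]
  exact Finset.card_ne_zero_of_mem (Finset.mem_filter.2 ⟨Finset.mem_univ _, H.one_mem⟩)

/-- On a vector fixed by the row stabilizers, the Young symmetrizers act, up to a nonzero factor,
as the column antisymmetrizers. -/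
lemma young_of_fixed (α β : YoungDiagram) : ∃ r : ℂ, r ≠ 0 ∧ ∀ v : M,
    (∀ g ∈ rowStabilizer k β, ρ (g, 1) v = v) → (∀ h ∈ rowStabilizer n α, ρ (1, h) v = v) →
    (actL ρ (youngSymmetrizer k β) * actR ρ (youngSymmetrizer n α)) v =
      r • actL ρ (colAnti k β) (actR ρ (colAnti n α) v) := by
  refine ⟨_, mul_ne_zero (card_filter_mem_ne_zero (rowStabilizer k β))
    (card_filter_mem_ne_zero (rowStabilizer n α)), fun v h1 h2 => ?_⟩
  have e1 : actL ρ (rowSym k β) v =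
      ((Finset.univ.filter (· ∈ rowStabilizer k β)).card : ℂ) • v := by
    rw [rowSym, actL_symz, ← sum_ite_mem_smul]
    refine Finset.sum_congr rfl fun g _ => ?_
    split_ifs with h
    · rw [h1 g h]; simp
    · rfl
  have e2 : actR ρ (rowSym n α) v =
      ((Finset.univ.filter (· ∈ rowStabilizer n α)).card : ℂ) • v := by
    rw [rowSym, actR_symz, ← sum_ite_mem_smul]
    refine Finset.sum_congr rfl fun g _ => ?_
    split_ifs with h
    · rw [h2 g h]; simp
    · rfl
  rw [youngSymmetrizer_eq, youngSymmetrizer_eq, map_mul, map_mul, Module.End.mul_apply,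
    Module.End.mul_apply, Module.End.mul_apply, e2, map_smul, map_smul, map_smul,
    actL_actR_apply ρ (rowSym k β), e1, map_smul, map_smul, smul_smul, mul_comm]

end Generic

variable {k : ℕ} {α β : YoungDiagram}

/-- The indicator of the surjections in `O₁` satisfying `RowCond`. -/
def rowVec (k : ℕ) (α β : YoungDiagram) (i : ℕ) : MonoidAlgebra ℂ (O1Type k) :=
  .ofCoeff (Finsupp.equivFunOnFinite.symm fun f => if RowCond α β i f.1.1 then 1 else 0)

lemma rowVec_coeff (i : ℕ) (f : O1Type k) :
    (rowVec k α β i).coeff f = if RowCond α β i f.1.1 then 1 else 0 := rfl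

lemma rowCond_smul {i : ℕ} {g : Perm (Fin k)} {h : Perm (Fin (k + 2))}
    (hg : g ∈ rowStabilizer k β) (hh : h ∈ rowStabilizer (k + 2) α) (f : O1Type k)
    (hf : RowCond α β i f.1.1) : RowCond α β i (((g, h) • f : O1Type k)).1.1 := by
  have hh' : ∀ x : Fin (k + 2), rowIndex α (h⁻¹ x) = rowIndex α x :=
    (rowStabilizer (k + 2) α).inv_mem hh
  have he : ∀ x, (((g, h) • f : O1Type k)).1.1 x = g (f.1.1 (h⁻¹ x)) := fun x => rfl
  refine ⟨fun x hx => ?_, fun x x' hne e => ?_⟩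
  · rw [he, hg, ← hf.1 (h⁻¹ x), hh']
    intro x' hx'
    have hi : h⁻¹ (h x') = x' := by simp
    rw [← hx (h x') (by rw [he, he, hi, hx']), hi]
  · rw [he, he, EmbeddingLike.apply_eq_iff_eq] at e
    rw [he, hg]
    exact hf.2 _ _ ((h⁻¹).injective.ne hne) e

lemma rowVec_fixed {i : ℕ} {g : Perm (Fin k)} {h : Perm (Fin (k + 2))}
    (hg : g ∈ rowStabilizer k β) (hh : h ∈ rowStabilizer (k + 2) α) :
    Representation.ofMulAction ℂ (Perm (Fin k) × Perm (Fin (k + 2))) (O1Type k) (g, h)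
      (rowVec k α β i) = rowVec k α β i := by
  apply MonoidAlgebra.ext
  ext f
  rw [Representation.coeff_ofMulAction, rowVec_coeff, rowVec_coeff]
  have : RowCond α β i ((g, h)⁻¹ • f : O1Type k).1.1 ↔ RowCond α β i f.1.1 := by
    constructor
    · intro H
      have := rowCond_smul hg hh _ H
      rwa [smul_inv_smul] at this
    · exact rowCond_smul (inv_mem hg) (inv_mem hh) f
  simp only [this]

/-- Coefficients of the vector antisymmetrized by both column stabilizers. -/
lemma anti_coeff (v : MonoidAlgebra ℂ (O1Type k)) (f : O1Type k) :
    (actL (Representation.ofMulAction ℂ (Perm (Fin k) × Perm (Fin (k + 2))) (O1Type k))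
      (colAnti k β) (actR (Representation.ofMulAction ℂ (Perm (Fin k) × Perm (Fin (k + 2)))
        (O1Type k)) (colAnti (k + 2) α) v)).coeff f =
    ∑ P, ∑ Q, if P ∈ colStabilizer k β ∧ Q ∈ colStabilizer (k + 2) α then
      ((Perm.sign P : ℤ) : ℂ) * ((Perm.sign Q : ℤ) : ℂ) * v.coeff ((P⁻¹, Q⁻¹) • f) else 0 := by
  rw [colAnti, colAnti, actL_symz, MonoidAlgebra.coeff_sum, Finsupp.finsetSum_apply]
  refine Finset.sum_congr rfl fun P _ => ?_
  by_cases hP : P ∈ colStabilizer k β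
  · rw [if_pos hP, actR_symz, MonoidAlgebra.coeff_smul, Finsupp.smul_apply,
      Representation.coeff_ofMulAction, MonoidAlgebra.coeff_sum, Finsupp.finsetSum_apply,
      Finset.smul_sum]
    refine Finset.sum_congr rfl fun Q _ => ?_
    by_cases hQ : Q ∈ colStabilizer (k + 2) α
    · rw [if_pos hQ, if_pos ⟨hP, hQ⟩, MonoidAlgebra.coeff_smul, Finsupp.smul_apply,
        Representation.coeff_ofMulAction, smul_smul]
      rw [smul_smul, Prod.inv_mk, Prod.inv_mk, Prod.mk_mul_mk, inv_one, inv_one, one_mul, mul_one,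
        smul_eq_mul]
    · rw [if_neg hQ, if_neg fun h => hQ h.2]; simp
  · simp [hP]

/-- A family is independent as soon as it is triangular, with nonzero diagonal, against some family
of functionals. -/
lemma linearIndependent_of_triangular {ι M : Type} [Fintype ι] [AddCommGroup M] [Module ℂ M]
    (w : ι → M) (φ : ι → M →ₗ[ℂ] ℂ) (r : ι → ℕ) (hr : Function.Injective r)
    (h0 : ∀ i j, r j < r i → φ j (w i) = 0) (h1 : ∀ i, φ i (w i) ≠ 0) : LinearIndependent ℂ w := by
  rw [Fintype.linearIndependent_iff]
  intro c hc
  have key : ∀ m i, r i = m → c i = 0 := by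
    intro m
    induction m using Nat.strong_induction_on with
    | _ m ih =>
      intro j hj
      have h2 := congrArg (φ j) hc
      rw [map_sum, map_zero, Finset.sum_eq_single j] at h2
      · rw [map_smul, smul_eq_mul] at h2
        exact (mul_eq_zero.1 h2).resolve_right (h1 j)
      · intro i _ hi
        rcases lt_trichotomy (r i) (r j) with h | h | h
        · rw [ih _ (hj ▸ h) i rfl, zero_smul, map_zero]
        · exact absurd (hr h) hi
        · rw [map_smul, h0 i j h, smul_zero]
      · simp
  exact fun i => key _ i rfl

/-- The lower bound for the multiplicity. For `γ` with `β = γ ∪ {b}`, let `w γ` be the image, under the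
two Young symmetrizers, of `rowVec` for the row of `b`. The coefficient of `w γ'` at the surjection
`gammaFun` of `γ` vanishes when `b'` is in a lower row than `b`, and for `γ' = γ` all nonzero terms
of the coefficient have the same sign, so these vectors are independent. -/
lemma card_mids_le {m : ℕ} (hβ : β.card = m + 1) (hα : α.card = m + 3) :
    (mids m β α).card ≤ multIn (outerTensor (SpechtRep (m + 1) β) (SpechtRep (m + 3) α))
      (permRep (O1Type (m + 1))) := by
  have hmid : ∀ γ : mids m β α, γ.1.card = m ∧ γ.1 ≤ β ∧ IsHStrip γ.1 α := fun γ =>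
    ⟨mem_YD.1 (Finset.mem_filter.1 γ.2).1, (Finset.mem_filter.1 γ.2).2⟩
  have hcov : ∀ γ : mids m β α, ∃ c, c ∉ γ.1.cells ∧ β.cells = insert c γ.1.cells := fun γ =>
    IsCover.exists_insert ⟨(hmid γ).2.1, by rw [(hmid γ).1, hβ]⟩
  choose b hb hμ using hcov
  have hc : ∀ γ : mids m β α, α.card = γ.1.card + 3 := fun γ => by rw [(hmid γ).1, hα]
  have hγ : ∀ γ : mids m β α, γ.1.cells ⊆ α.cells := fun γ => (hmid γ).2.2.1
  let F : mids m β α → O1Type (m + 1) := fun γ =>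
    ⟨⟨gammaFun hα hβ (hμ γ), gammaFun_surjective hα hβ (hμ γ) (hγ γ) (hc γ)⟩,
      gammaFun_kernelSizes hα hβ (hb γ) (hμ γ) (hγ γ) (hc γ)⟩
  let ρ := Representation.ofMulAction ℂ (Perm (Fin (m + 1)) × Perm (Fin (m + 3))) (O1Type (m + 1))
  obtain ⟨r, hr, hyoung⟩ := young_of_fixed ρ α β
  let w : mids m β α → MonoidAlgebra ℂ (O1Type (m + 1)) := fun γ =>
    (actL ρ (youngSymmetrizer (m + 1) β) * actR ρ (youngSymmetrizer (m + 3) α))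
      (rowVec (m + 1) α β (b γ).1)
  let φ : mids m β α → MonoidAlgebra ℂ (O1Type (m + 1)) →ₗ[ℂ] ℂ := fun γ =>
    Finsupp.lapply (F γ) ∘ₗ (MonoidAlgebra.coeffLinearEquiv ℂ).toLinearMap
  have hφ : ∀ γ γ', φ γ (w γ') = r * ∑ P, ∑ Q,
      if P ∈ colStabilizer (m + 1) β ∧ Q ∈ colStabilizer (m + 3) α then
        ((Perm.sign P : ℤ) : ℂ) * ((Perm.sign Q : ℤ) : ℂ) *
          (if RowCond α β (b γ').1 ((P⁻¹, Q⁻¹) • F γ).1.1 then 1 else 0) else 0 := by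
    intro γ γ'
    have e := hyoung (rowVec (m + 1) α β (b γ').1) (fun g hg => rowVec_fixed hg (one_mem _))
      (fun h hh => rowVec_fixed (one_mem _) hh)
    change (w γ').coeff (F γ) = _
    rw [show w γ' = _ from e, MonoidAlgebra.coeff_smul, Finsupp.smul_apply, smul_eq_mul,
      anti_coeff]
    rfl
  have hcond : ∀ γ i P Q, RowCond α β i ((P⁻¹, Q⁻¹) • F γ : O1Type (m + 1)).1.1 → _ :=
    fun γ i P Q h => rowCond_gammaFun hα hβ (hb γ) (hμ γ) (hγ γ) (hc γ) P⁻¹ Q⁻¹ i h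
  have hw : LinearIndependent ℂ w := by
    refine linearIndependent_of_triangular w φ (fun γ => (b γ).1) ?_ ?_ ?_
    · intro γ γ' h
      exact Subtype.ext (removable_row_inj (hb γ) (hμ γ) (hb γ') (hμ γ') h)
    · intro γ' γ hlt
      rw [hφ, Finset.sum_eq_zero, mul_zero]
      intro P _
      refine Finset.sum_eq_zero fun Q _ => ?_
      split_ifs with h h'
      · exfalso
        have h1 := (hcond γ _ P Q h').1
        have h2 := row_gammaPt_le hβ (hb γ) (hμ γ) (inv_mem h.1)
        omega
      · rw [mul_zero]
      · rfl
    · intro γ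
      -- for equal rows every nonzero summand equals `1`, so the sum counts pairs
      have hone : ∀ P Q, (if P ∈ colStabilizer (m + 1) β ∧ Q ∈ colStabilizer (m + 3) α then
          ((Perm.sign P : ℤ) : ℂ) * ((Perm.sign Q : ℤ) : ℂ) *
          (if RowCond α β (b γ).1 ((P⁻¹, Q⁻¹) • F γ).1.1 then 1 else 0) else 0) =
          (((if P ∈ colStabilizer (m + 1) β ∧ Q ∈ colStabilizer (m + 3) α ∧
            RowCond α β (b γ).1 ((P⁻¹, Q⁻¹) • F γ).1.1 then 1 else 0 : ℕ)) : ℂ) := by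
        intro P Q
        by_cases h : P ∈ colStabilizer (m + 1) β ∧ Q ∈ colStabilizer (m + 3) α
        · by_cases h' : RowCond α β (b γ).1 ((P⁻¹, Q⁻¹) • F γ).1.1
          · have h1 := hcond γ _ P Q h'
            have h2 := sign_eq_of_rowCond hα hβ (hb γ) (hμ γ) (hmid γ).2.2 (inv_mem h.1)
              (inv_mem h.2) h1.1 h1.2
            rw [Perm.sign_inv, Perm.sign_inv] at h2
            rw [if_pos h, if_pos h', if_pos ⟨h.1, h.2, h'⟩, h2, unit_mul_self]
            simp
          · rw [if_pos h, if_neg h', if_neg fun h'' => h' h''.2.2]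
            simp
        · rw [if_neg h, if_neg fun h'' => h ⟨h''.1, h''.2.1⟩]
          simp
      rw [hφ]
      refine mul_ne_zero hr ?_
      simp only [hone]
      rw [Finset.sum_congr rfl fun P _ => (Nat.cast_sum _ _).symm, ← Nat.cast_sum,
        Nat.cast_ne_zero]
      intro hzero
      have h1 := (Finset.sum_eq_zero_iff.1 ((Finset.sum_eq_zero_iff.1 hzero) 1
        (Finset.mem_univ _))) 1 (Finset.mem_univ _)
      rw [if_pos] at h1
      · exact one_ne_zero h1
      · refine ⟨one_mem _, one_mem _, ?_⟩
        rw [inv_one, inv_one, ← Prod.one_eq_mk, one_smul]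
        exact rowCond_gammaFun_self hα hβ (hb γ) (hμ γ) (hγ γ) (hc γ)
  have hfin : Module.Finite ℂ (MonoidAlgebra ℂ (O1Type (m + 1))) :=
    Module.Finite.equiv (MonoidAlgebra.coeffLinearEquiv (S := ℂ) (M := O1Type (m + 1)) ℂ).symm
  rw [permRep, multIn_eq ρ hβ hα]
  let w' : mids m β α → LinearMap.range
      (actL ρ (youngSymmetrizer (m + 1) β) * actR ρ (youngSymmetrizer (m + 3) α)) :=
    fun γ => ⟨w γ, ⟨_, rfl⟩⟩
  have hw' : LinearIndependent ℂ w' :=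
    LinearIndependent.of_comp (Submodule.subtype _) hw
  have := hw'.fintype_card_le_finrank
  rwa [Fintype.card_coe] at this

end Lower

/-! ### Comparison of the two bounds -/

section Conclusion

/-- Since `∑ mult ⬝ dim S^β ⬝ dim S^α ≤ |O₁| ≤ ∑ N ⬝ f^β ⬝ f^α`, with `N` the number of middle diagrams,
and the terms satisfy the opposite inequality one by one, all of them are equalities. -/
lemma multIn_eq_card_mids {α β : YoungDiagram} {m : ℕ} (hβ : β.card = m + 1)
    (hα : α.card = m + 3) :
    multIn (outerTensor (SpechtRep (m + 1) β) (SpechtRep (m + 3) α))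
      (permRep (O1Type (m + 1))) = (mids m β α).card := by
  have hfin : Module.Finite ℂ (MonoidAlgebra ℂ (O1Type (m + 1))) :=
    Module.Finite.equiv (MonoidAlgebra.coeffLinearEquiv (S := ℂ) (M := O1Type (m + 1)) ℂ).symm
  have hdim : Module.finrank ℂ (MonoidAlgebra ℂ (O1Type (m + 1))) = Nat.card (O1Type (m + 1)) := by
    have := Fintype.ofFinite (O1Type (m + 1))
    rw [(MonoidAlgebra.coeffLinearEquiv (S := ℂ) (M := O1Type (m + 1)) ℂ).finrank_eq,
      Module.finrank_finsupp_self, Nat.card_eq_fintype_card]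
  have hub := sum_multIn_le
    (Representation.ofMulAction ℂ (Perm (Fin (m + 1)) × Perm (Fin (m + 3))) (O1Type (m + 1)))
  rw [hdim] at hub
  have hub := (hub.trans (card_O1_le m)).trans (sum_mids m).ge
  -- comparing the two double sums term by term
  have hle : ∀ β ∈ YD (m + 1), ∀ α ∈ YD (m + 3),
      (mids m β α).card * (numSYT (m + 1) β * numSYT (m + 3) α) ≤
      multIn (outerTensor (SpechtRep (m + 1) β) (SpechtRep (m + 3) α)) (permRep (O1Type (m + 1))) *
        (Module.finrank ℂ (spechtSub (m + 1) β) * Module.finrank ℂ (spechtSub (m + 3) α)) :=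
    fun β hβ α hα => Nat.mul_le_mul (card_mids_le (mem_YD.1 hβ) (mem_YD.1 hα))
      (Nat.mul_le_mul (numSYT_le_finrank (mem_YD.1 hβ)) (numSYT_le_finrank (mem_YD.1 hα)))
  have heq := le_antisymm (Finset.sum_le_sum fun β hβ => Finset.sum_le_sum (hle β hβ)) hub
  have h1 := (Finset.sum_eq_sum_iff_of_le fun β hβ => Finset.sum_le_sum (hle β hβ)).1 heq β
    (mem_YD.2 hβ)
  have h2 := (Finset.sum_eq_sum_iff_of_le (hle β (mem_YD.2 hβ))).1 h1 α (mem_YD.2 hα)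
  have hpos : 0 < numSYT (m + 1) β * numSYT (m + 3) α :=
    Nat.mul_pos (numSYT_pos _ _ (mem_YD.2 hβ)) (numSYT_pos _ _ (mem_YD.2 hα))
  refine le_antisymm (Nat.le_of_mul_le_mul_right ?_ hpos) (card_mids_le hβ hα)
  rw [h2]
  exact Nat.mul_le_mul_left _
    (Nat.mul_le_mul (numSYT_le_finrank hβ) (numSYT_le_finrank hα))

end Conclusion

/-- Let `α ⊢ k+2` and `β ⊢ k` with `k ≥ 1`.  The multiplicity of the irreducible
`S_k × S_{k+2}`-module `S^β ⊗ S^α` as a constituent of the permutation module `ℂO₁`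
equals the number of ways to obtain `α` from `β` by removing one box and then adding
three boxes with no two of the added boxes in the same column (equivalently, the number
of intermediate diagrams `γ`); in particular `S^β ⊗ S^α` occurs in `ℂO₁` if and only
if such a construction exists. -/
theorem multiplicity_in_O1_eq_number_of_ways (k : ℕ) (hk : 1 ≤ k) (α β : YoungDiagram)
    (hα : α.card = k + 2) (hβ : β.card = k) :
    multIn (outerTensor (SpechtRep k β) (SpechtRep (k + 2) α)) (permRep (O1Type k)) =
      Set.ncard {γ : YoungDiagram | γ.cells ⊆ β.cells ∧ γ.card + 1 = β.card ∧
        γ.cells ⊆ α.cells ∧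
        ∀ c₁ ∈ α.cells \ γ.cells, ∀ c₂ ∈ α.cells \ γ.cells, c₁ ≠ c₂ → c₁.2 ≠ c₂.2} := by
  obtain ⟨m, rfl⟩ : ∃ m, k = m + 1 := ⟨k - 1, by omega⟩
  refine (multIn_eq_card_mids hβ hα).trans ?_
  rw [← Set.ncard_coe_finset]
  congr 1
  ext γ
  rw [Finset.mem_coe, mids, Finset.mem_filter, mem_YD, Set.mem_ofPred_eq,
    YoungDiagram.cells_subset_iff, hβ, Nat.add_right_cancel_iff, IsHStrip]
  tauto
end
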